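/- arXiv:2104.14686 — 2 statements merged into one kernel-verified Lean document; each statement's English description precedes it below -/
import Mathlib

section
/- If m → G ← n and n → H ← p are monogamous acyclic cospans of hypergraphs with discrete interfaces, then their composite cospan m → G+_n H ← p (obtained by pushout, i.e. by gluing G and H along the common interface n) is monogamous and acyclic. -/
namespace SDRT

/-- A directed hypergraph: a set of nodes and, for each hyperedge, an ordered
list of source nodes and an ordered list of target nodes.  A `(k,l)`-hyperedge
is a hyperedge with `k` sources and `l` targets. -/
structure Hyp : Type 1 where
  V : Type
  E : Type
  src : E → List V
  tgt : E → List V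

namespace Hyp

/-- The set of pairs `(h, i)` such that `v` is the `i`-th target of the hyperedge `h`.
The in-degree of `v` is the number of such pairs. -/
def inPairs (G : Hyp) (v : G.V) : Set (G.E × ℕ) := {p | (G.tgt p.1)[p.2]? = some v}

/-- The set of pairs `(h, j)` such that `v` is the `j`-th source of the hyperedge `h`.
The out-degree of `v` is the number of such pairs. -/
def outPairs (G : Hyp) (v : G.V) : Set (G.E × ℕ) := {p | (G.src p.1)[p.2]? = some v}

/-- `v` has in-degree `0`. -/
def inDegZero (G : Hyp) (v : G.V) : Prop := G.inPairs v = ∅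

/-- `v` has in-degree `1`. -/
def inDegOne (G : Hyp) (v : G.V) : Prop := ∃! p, p ∈ G.inPairs v

/-- `v` has out-degree `0`. -/
def outDegZero (G : Hyp) (v : G.V) : Prop := G.outPairs v = ∅

/-- `v` has out-degree `1`. -/
def outDegOne (G : Hyp) (v : G.V) : Prop := ∃! p, p ∈ G.outPairs v

/-- `h'` is a successor of `h` if some node is both a target of `h` and a source of `h'`. -/
def Successor (G : Hyp) (h h' : G.E) : Prop := ∃ v, v ∈ G.tgt h ∧ v ∈ G.src h'

/-- `l` is a path (nonempty sequence of hyperedges, each a successor of the previous)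
from the node `v` to the node `v'`: `v` is among the sources of the first hyperedge
and `v'` among the targets of the last one. -/
def PathFrom (G : Hyp) (l : List G.E) (v v' : G.V) : Prop :=
  ∃ hne : l ≠ [], l.Chain' G.Successor ∧ v ∈ G.src (l.head hne) ∧ v' ∈ G.tgt (l.getLast hne)

/-- `l` is a path from the hyperedge `h` to the hyperedge `h'`. -/
def EdgePath (G : Hyp) (l : List G.E) (h h' : G.E) : Prop :=
  ∃ hne : l ≠ [], l.Chain' G.Successor ∧ l.head hne = h ∧ l.getLast hne = h'

/-- A hypergraph is acyclic if there is no path from a node to itself. -/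
def Acyclic (G : Hyp) : Prop := ∀ (v : G.V) (l : List G.E), ¬ G.PathFrom l v v

end Hyp

/-- A subhypergraph: a set of nodes and hyperedges closed under taking the sources
and targets of its hyperedges. -/
structure SubHyp (G : Hyp) where
  nodes : Set G.V
  edges : Set G.E
  src_mem : ∀ e ∈ edges, ∀ v ∈ G.src e, v ∈ nodes
  tgt_mem : ∀ e ∈ edges, ∀ v ∈ G.tgt e, v ∈ nodes

/-- A subhypergraph `H` of `G` is convex if every path in `G` between nodes of `H`
consists only of hyperedges of `H`. -/
def SubHyp.Convex {G : Hyp} (H : SubHyp G) : Prop :=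
  ∀ v ∈ H.nodes, ∀ v' ∈ H.nodes, ∀ l, G.PathFrom l v v' → ∀ e ∈ l, e ∈ H.edges

/-- The hypergraph underlying a subhypergraph. -/
def SubHyp.toHyp {G : Hyp} (H : SubHyp G) : Hyp where
  V := H.nodes
  E := H.edges
  src := fun e => (G.src e.1).pmap (fun v hv => (⟨v, hv⟩ : H.nodes))
    (fun v hv => H.src_mem e.1 e.2 v hv)
  tgt := fun e => (G.tgt e.1).pmap (fun v hv => (⟨v, hv⟩ : H.nodes))
    (fun v hv => H.tgt_mem e.1 e.2 v hv)

/-- A cospan of hypergraphs with discrete interfaces `m → G ← n`. -/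
structure Cospan (m n : Type) : Type 1 where
  G : Hyp
  inp : m → G.V
  out : n → G.V

namespace Cospan

/-- A cospan is monogamous if both legs are injective, nodes in the image of the
input leg have in-degree 0, all other nodes have in-degree 1, nodes in the image
of the output leg have out-degree 0, and all other nodes have out-degree 1. -/
def Monogamous {m n : Type} (A : Cospan m n) : Prop :=
  Function.Injective A.inp ∧ Function.Injective A.out ∧
  (∀ v ∈ Set.range A.inp, A.G.inDegZero v) ∧
  (∀ v ∉ Set.range A.inp, A.G.inDegOne v) ∧
  (∀ v ∈ Set.range A.out, A.G.outDegZero v) ∧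
  (∀ v ∉ Set.range A.out, A.G.outDegOne v)

/-- A cospan is acyclic if its carrier is. -/
def Acyclic {m n : Type} (A : Cospan m n) : Prop := A.G.Acyclic

/-- Composition of cospans by pushout: glue `G` and `H` along the common
interface `n`, identifying `A.out k` with `B.inp k` for every `k : n`. -/
def comp {m n p : Type} (A : Cospan m n) (B : Cospan n p) : Cospan m p where
  G := { V := Quot (fun x y : A.G.V ⊕ B.G.V =>
                      ∃ k : n, x = Sum.inl (A.out k) ∧ y = Sum.inr (B.inp k))
         E := A.G.E ⊕ B.G.E
         src := Sum.elim (fun e => (A.G.src e).map (fun v => Quot.mk _ (Sum.inl v)))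
                         (fun e => (B.G.src e).map (fun v => Quot.mk _ (Sum.inr v)))
         tgt := Sum.elim (fun e => (A.G.tgt e).map (fun v => Quot.mk _ (Sum.inl v)))
                         (fun e => (B.G.tgt e).map (fun v => Quot.mk _ (Sum.inr v))) }
  inp := fun x => Quot.mk _ (Sum.inl (A.inp x))
  out := fun y => Quot.mk _ (Sum.inr (B.out y))

/-- Monoidal product (tensor) of cospans: disjoint union of the carriers, with
the evident interface maps. -/
def tensor {m₁ n₁ m₂ n₂ : Type} (A : Cospan m₁ n₁) (B : Cospan m₂ n₂) :
    Cospan (m₁ ⊕ m₂) (n₁ ⊕ n₂) where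
  G := { V := A.G.V ⊕ B.G.V
         E := A.G.E ⊕ B.G.E
         src := Sum.elim (fun e => (A.G.src e).map Sum.inl) (fun e => (B.G.src e).map Sum.inr)
         tgt := Sum.elim (fun e => (A.G.tgt e).map Sum.inl) (fun e => (B.G.tgt e).map Sum.inr) }
  inp := Sum.elim (fun x => Sum.inl (A.inp x)) (fun x => Sum.inr (B.inp x))
  out := Sum.elim (fun y => Sum.inl (A.out y)) (fun y => Sum.inr (B.out y))

/-- The identity cospan on `k`: the discrete hypergraph on `k` with identity legs. -/
def idCospan (k : Type) : Cospan k k where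
  G := { V := k, E := Empty, src := Empty.elim, tgt := Empty.elim }
  inp := id
  out := id

end Cospan

/-- An isomorphism of cospans: a hypergraph isomorphism of the carriers commuting
with the interface legs. -/
structure CospanIso {m n : Type} (A B : Cospan m n) where
  nodeEquiv : A.G.V ≃ B.G.V
  edgeEquiv : A.G.E ≃ B.G.E
  src_eq : ∀ e, B.G.src (edgeEquiv e) = (A.G.src e).map nodeEquiv
  tgt_eq : ∀ e, B.G.tgt (edgeEquiv e) = (A.G.tgt e).map nodeEquiv
  inp_eq : ∀ x, nodeEquiv (A.inp x) = B.inp x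
  out_eq : ∀ y, nodeEquiv (A.out y) = B.out y

/-- Two cospans are isomorphic if there is an isomorphism between them. -/
def Cospan.Isomorphic {m n : Type} (A B : Cospan m n) : Prop := Nonempty (CospanIso A B)

/-- A homomorphism of hypergraphs: maps nodes to nodes and hyperedges to
hyperedges, preserving the ordered lists of sources and targets. -/
structure HypHom (G H : Hyp) where
  nodeMap : G.V → H.V
  edgeMap : G.E → H.E
  src_eq : ∀ e, H.src (edgeMap e) = (G.src e).map nodeMap
  tgt_eq : ∀ e, H.tgt (edgeMap e) = (G.tgt e).map nodeMap

/-- The image of a hypergraph homomorphism, as a subhypergraph of the codomain. -/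
def HypHom.image {G H : Hyp} (f : HypHom G H) : SubHyp H where
  nodes := Set.range f.nodeMap
  edges := Set.range f.edgeMap
  src_mem := by
    rintro e ⟨e', rfl⟩ v hv
    rw [f.src_eq] at hv
    rcases List.mem_map.mp hv with ⟨w, -, rfl⟩
    exact ⟨w, rfl⟩
  tgt_mem := by
    rintro e ⟨e', rfl⟩ v hv
    rw [f.tgt_eq] at hv
    rcases List.mem_map.mp hv with ⟨w, -, rfl⟩
    exact ⟨w, rfl⟩


namespace HypHom

variable {G H : Hyp} (f : HypHom G H)

theorem mem_inPairs_iff (hf : Function.Injective f.nodeMap) {v : G.V} {e : G.E} {i : ℕ} :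
    (f.edgeMap e, i) ∈ H.inPairs (f.nodeMap v) ↔ (e, i) ∈ G.inPairs v := by
  simp [Hyp.inPairs, f.tgt_eq, hf.eq_iff]

theorem mem_outPairs_iff (hf : Function.Injective f.nodeMap) {v : G.V} {e : G.E} {i : ℕ} :
    (f.edgeMap e, i) ∈ H.outPairs (f.nodeMap v) ↔ (e, i) ∈ G.outPairs v := by
  simp [Hyp.outPairs, f.src_eq, hf.eq_iff]

theorem inPairs_nodeMap (hf : Function.Injective f.nodeMap) {v : G.V}
    (hv : ∀ h, f.nodeMap v ∈ H.tgt h → h ∈ Set.range f.edgeMap) :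
    H.inPairs (f.nodeMap v) = Prod.map f.edgeMap id '' G.inPairs v := by
  ext ⟨h, i⟩
  constructor
  · intro hp
    obtain ⟨e, rfl⟩ := hv h (List.mem_of_getElem? hp)
    exact ⟨(e, i), (f.mem_inPairs_iff hf).1 hp, rfl⟩
  · rintro ⟨⟨e, j⟩, he, heq⟩
    rw [← heq]
    exact (f.mem_inPairs_iff hf).2 he

theorem outPairs_nodeMap (hf : Function.Injective f.nodeMap) {v : G.V}
    (hv : ∀ h, f.nodeMap v ∈ H.src h → h ∈ Set.range f.edgeMap) :
    H.outPairs (f.nodeMap v) = Prod.map f.edgeMap id '' G.outPairs v := by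
  ext ⟨h, i⟩
  constructor
  · intro hp
    obtain ⟨e, rfl⟩ := hv h (List.mem_of_getElem? hp)
    exact ⟨(e, i), (f.mem_outPairs_iff hf).1 hp, rfl⟩
  · rintro ⟨⟨e, j⟩, he, heq⟩
    rw [← heq]
    exact (f.mem_outPairs_iff hf).2 he

/-- A path of `H` all of whose hyperedges lie in the image of an acyclic hypergraph `G`,
embedded injectively on nodes, is not closed. -/
theorem not_pathFrom_of_acyclic (hf : Function.Injective f.nodeMap) (hG : G.Acyclic)
    {l : List H.E} (hl : ∀ h ∈ l, h ∈ Set.range f.edgeMap) (v : H.V) : ¬ H.PathFrom l v v := by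
  rintro ⟨hne, hchain, hsrc, htgt⟩
  obtain ⟨l, rfl⟩ : l ∈ Set.range (List.map f.edgeMap) := by
    rw [Set.range_list_map]
    exact hl
  have hne' : l ≠ [] := by simpa using hne
  rw [List.head_map, f.src_eq] at hsrc
  rw [List.getLast_map, f.tgt_eq] at htgt
  obtain ⟨s, hs, rfl⟩ := List.mem_map.1 hsrc
  obtain ⟨t, ht, hts⟩ := List.mem_map.1 htgt
  obtain rfl := hf hts
  refine hG t l ⟨hne', List.isChain_of_isChain_map f.edgeMap ?_ hchain, hs, ht⟩
  rintro a b ⟨w, hwa, hwb⟩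
  rw [f.tgt_eq] at hwa
  rw [f.src_eq] at hwb
  obtain ⟨x, hx, rfl⟩ := List.mem_map.1 hwa
  obtain ⟨y, hy, hyx⟩ := List.mem_map.1 hwb
  obtain rfl := hf hyx
  exact ⟨y, hx, hy⟩

end HypHom

theorem existsUnique_mem_image {α β : Type*} {f : α → β} {s : Set α}
    (h : ∃! a, a ∈ s) : ∃! b, b ∈ f '' s := by
  obtain ⟨a, ha, hu⟩ := h
  refine ⟨f a, ⟨a, ha, rfl⟩, ?_⟩
  rintro _ ⟨a', ha', rfl⟩
  rw [hu a' ha']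

namespace Cospan

variable {m n p : Type}

namespace Monogamous

variable {A : Cospan m n}

theorem notMem_range_inp (hA : A.Monogamous) {v : A.G.V} {e : A.G.E} (hv : v ∈ A.G.tgt e) :
    v ∉ Set.range A.inp := by
  intro hr
  obtain ⟨i, hi⟩ := List.mem_iff_getElem?.1 hv
  have h : (e, i) ∈ A.G.inPairs v := hi
  rw [hA.2.2.1 v hr] at h
  exact h

theorem notMem_range_out (hA : A.Monogamous) {v : A.G.V} {e : A.G.E} (hv : v ∈ A.G.src e) :
    v ∉ Set.range A.out := by
  intro hr
  obtain ⟨i, hi⟩ := List.mem_iff_getElem?.1 hv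
  have h : (e, i) ∈ A.G.outPairs v := hi
  rw [hA.2.2.2.2.1 v hr] at h
  exact h

end Monogamous

variable (A : Cospan m n) (B : Cospan n p)

/-- The homomorphism from the first carrier into the carrier of the composite. -/
def compInl : HypHom A.G (A.comp B).G where
  nodeMap v := Quot.mk _ (Sum.inl v)
  edgeMap := Sum.inl
  src_eq _ := rfl
  tgt_eq _ := rfl

/-- The homomorphism from the second carrier into the carrier of the composite. -/
def compInr : HypHom B.G (A.comp B).G where
  nodeMap v := Quot.mk _ (Sum.inr v)
  edgeMap := Sum.inr
  src_eq _ := rfl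
  tgt_eq _ := rfl

theorem compInl_out (k : n) :
    (A.compInl B).nodeMap (A.out k) = (A.compInr B).nodeMap (B.inp k) :=
  Quot.sound ⟨k, rfl, rfl⟩

variable {A B}

/-- A canonical representative of each node of the composite, taken in the first carrier
whenever there is one. -/
noncomputable def compRepr (hB : Function.Injective B.inp) :
    (A.comp B).G.V → A.G.V ⊕ B.G.V :=
  Quot.lift (Sum.elim Sum.inl (Function.extend B.inp (Sum.inl ∘ A.out) Sum.inr)) <| by
    rintro _ _ ⟨k, rfl, rfl⟩
    simp [hB.extend_apply]

theorem compRepr_compInl (hB : Function.Injective B.inp) (v : A.G.V) :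
    compRepr hB ((A.compInl B).nodeMap v) = Sum.inl v := rfl

theorem compRepr_compInr_inp (hB : Function.Injective B.inp) (k : n) :
    compRepr hB ((A.compInr B).nodeMap (B.inp k)) = Sum.inl (A.out k) :=
  hB.extend_apply _ _ k

theorem compRepr_compInr_of_notMem (hB : Function.Injective B.inp) {w : B.G.V}
    (hw : w ∉ Set.range B.inp) :
    compRepr hB ((A.compInr B).nodeMap w) = Sum.inr w :=
  Function.extend_apply' _ _ _ hw

theorem compInl_injective (hB : Function.Injective B.inp) :
    Function.Injective (A.compInl B).nodeMap := fun _ _ h =>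
  Sum.inl_injective (congrArg (compRepr hB) h)

theorem compInl_eq_compInr (hB : Function.Injective B.inp) {v : A.G.V} {w : B.G.V}
    (h : (A.compInl B).nodeMap v = (A.compInr B).nodeMap w) :
    ∃ k, v = A.out k ∧ w = B.inp k := by
  have h' := congrArg (compRepr hB) h
  by_cases hw : w ∈ Set.range B.inp
  · obtain ⟨k, rfl⟩ := hw
    rw [compRepr_compInl, compRepr_compInr_inp] at h'
    exact ⟨k, Sum.inl_injective h', rfl⟩
  · rw [compRepr_compInl, compRepr_compInr_of_notMem hB hw] at h'
    cases h'

theorem compInr_injective (hA : Function.Injective A.out) (hB : Function.Injective B.inp) :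
    Function.Injective (A.compInr B).nodeMap := by
  intro v w h
  by_cases hv : v ∈ Set.range B.inp
  · obtain ⟨k, rfl⟩ := hv
    rw [← compInl_out] at h
    obtain ⟨k', hk, rfl⟩ := compInl_eq_compInr hB h
    rw [hA hk]
  by_cases hw : w ∈ Set.range B.inp
  · obtain ⟨k, rfl⟩ := hw
    rw [← compInl_out] at h
    obtain ⟨k', hk, rfl⟩ := compInl_eq_compInr hB h.symm
    rw [hA hk]
  have h' := congrArg (compRepr hB) h
  rw [compRepr_compInr_of_notMem hB hv, compRepr_compInr_of_notMem hB hw] at h'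
  exact Sum.inr_injective h'

theorem comp_node_cases (x : (A.comp B).G.V) :
    (∃ v, (A.compInl B).nodeMap v = x) ∨
      ∃ w, w ∉ Set.range B.inp ∧ (A.compInr B).nodeMap w = x := by
  obtain ⟨v | w, rfl⟩ := Quot.exists_rep x
  · exact Or.inl ⟨v, rfl⟩
  · by_cases hw : w ∈ Set.range B.inp
    · obtain ⟨k, rfl⟩ := hw
      exact Or.inl ⟨A.out k, compInl_out A B k⟩
    · exact Or.inr ⟨w, hw, rfl⟩

theorem inPairs_compInl (hB : B.Monogamous) (v : A.G.V) :
    (A.comp B).G.inPairs ((A.compInl B).nodeMap v) =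
      Prod.map Sum.inl id '' A.G.inPairs v := by
  refine (A.compInl B).inPairs_nodeMap (compInl_injective hB.1) ?_
  rintro (e | e) h
  · exact ⟨e, rfl⟩
  · obtain ⟨w, hw, hwv⟩ := List.mem_map.1 h
    obtain ⟨k, -, hk⟩ := compInl_eq_compInr hB.1 hwv.symm
    exact absurd ⟨k, hk.symm⟩ (hB.notMem_range_inp hw)

theorem inPairs_compInr (hA : A.Monogamous) (hB : B.Monogamous) {w : B.G.V}
    (hw : w ∉ Set.range B.inp) :
    (A.comp B).G.inPairs ((A.compInr B).nodeMap w) =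
      Prod.map Sum.inr id '' B.G.inPairs w := by
  refine (A.compInr B).inPairs_nodeMap (compInr_injective hA.2.1 hB.1) ?_
  rintro (e | e) h
  · obtain ⟨v, hv, hvw⟩ := List.mem_map.1 h
    obtain ⟨k, -, hk⟩ := compInl_eq_compInr hB.1 hvw
    exact absurd ⟨k, hk.symm⟩ hw
  · exact ⟨e, rfl⟩

theorem outPairs_compInl (hB : B.Monogamous) {v : A.G.V} (hv : v ∉ Set.range A.out) :
    (A.comp B).G.outPairs ((A.compInl B).nodeMap v) =
      Prod.map Sum.inl id '' A.G.outPairs v := by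
  refine (A.compInl B).outPairs_nodeMap (compInl_injective hB.1) ?_
  rintro (e | e) h
  · exact ⟨e, rfl⟩
  · obtain ⟨w, hw, hwv⟩ := List.mem_map.1 h
    obtain ⟨k, hk, -⟩ := compInl_eq_compInr hB.1 hwv.symm
    exact absurd ⟨k, hk.symm⟩ hv

theorem outPairs_compInr (hA : A.Monogamous) (hB : B.Monogamous) (w : B.G.V) :
    (A.comp B).G.outPairs ((A.compInr B).nodeMap w) =
      Prod.map Sum.inr id '' B.G.outPairs w := by
  refine (A.compInr B).outPairs_nodeMap (compInr_injective hA.2.1 hB.1) ?_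
  rintro (e | e) h
  · obtain ⟨v, hv, hvw⟩ := List.mem_map.1 h
    obtain ⟨k, hk, -⟩ := compInl_eq_compInr hB.1 hvw
    exact absurd ⟨k, hk.symm⟩ (hA.notMem_range_out hv)
  · exact ⟨e, rfl⟩

theorem Monogamous.comp (hA : A.Monogamous) (hB : B.Monogamous) : (A.comp B).Monogamous := by
  refine ⟨(compInl_injective hB.1).comp hA.1, (compInr_injective hA.2.1 hB.1).comp hB.2.1,
    ?_, ?_, ?_, ?_⟩
  · rintro _ ⟨x, rfl⟩
    exact (inPairs_compInl hB _).trans (Set.image_eq_empty.2 (hA.2.2.1 _ ⟨x, rfl⟩))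
  · intro x hx
    rcases comp_node_cases x with ⟨v, rfl⟩ | ⟨w, hw, rfl⟩
    · rw [Hyp.inDegOne, inPairs_compInl hB]
      refine existsUnique_mem_image (hA.2.2.2.1 v ?_)
      rintro ⟨y, rfl⟩
      exact hx ⟨y, rfl⟩
    · rw [Hyp.inDegOne, inPairs_compInr hA hB hw]
      exact existsUnique_mem_image (hB.2.2.2.1 w hw)
  · rintro _ ⟨y, rfl⟩
    exact (outPairs_compInr hA hB _).trans (Set.image_eq_empty.2 (hB.2.2.2.2.1 _ ⟨y, rfl⟩))
  · intro x hx
    have hinr : ∀ w, (A.compInr B).nodeMap w ∉ Set.range (A.comp B).out →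
        (A.comp B).G.outDegOne ((A.compInr B).nodeMap w) := by
      intro w hw
      rw [Hyp.outDegOne, outPairs_compInr hA hB]
      refine existsUnique_mem_image (hB.2.2.2.2.2 w ?_)
      rintro ⟨y, rfl⟩
      exact hw ⟨y, rfl⟩
    rcases comp_node_cases x with ⟨v, rfl⟩ | ⟨w, -, rfl⟩
    · by_cases hv : v ∈ Set.range A.out
      · obtain ⟨k, rfl⟩ := hv
        rw [compInl_out] at hx ⊢
        exact hinr _ hx
      · rw [Hyp.outDegOne, outPairs_compInl hB hv]
        exact existsUnique_mem_image (hA.2.2.2.2.2 v hv)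
    · exact hinr _ hx

/-- No node is both a target of a hyperedge of `B` and a source of a hyperedge of `A`. -/
theorem notMem_src_inl_of_mem_tgt_inr (hB : B.Monogamous) {e : A.G.E} {e' : B.G.E}
    {x : (A.comp B).G.V} (hx : x ∈ (A.comp B).G.tgt (Sum.inr e')) :
    x ∉ (A.comp B).G.src (Sum.inl e) := by
  intro hx'
  obtain ⟨w, hw, rfl⟩ := List.mem_map.1 hx
  obtain ⟨v, -, hvw⟩ := List.mem_map.1 hx'
  obtain ⟨k, -, hk⟩ := compInl_eq_compInr hB.1 hvw
  exact hB.notMem_range_inp hw ⟨k, hk.symm⟩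

theorem Acyclic.comp (hAm : A.Monogamous) (hAa : A.Acyclic) (hBm : B.Monogamous)
    (hBa : B.Acyclic) : (A.comp B).Acyclic := by
  intro x l hl
  obtain ⟨hne, hchain, hsrc, htgt⟩ := id hl
  rcases hlast : l.getLast hne with e | e
  · refine (A.compInl B).not_pathFrom_of_acyclic (compInl_injective hBm.1) hAa ?_ x hl
    refine List.IsChain.backwards_induction _ l hchain ?_ fun _ => ⟨e, hlast.symm⟩
    rintro (a | a) _ ⟨y, hya, hyb⟩ ⟨b, rfl⟩
    · exact ⟨a, rfl⟩
    · exact absurd hyb (notMem_src_inl_of_mem_tgt_inr hBm hya)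
  · rw [hlast] at htgt
    refine (A.compInr B).not_pathFrom_of_acyclic (compInr_injective hAm.2.1 hBm.1) hBa ?_ x hl
    refine List.IsChain.induction _ l hchain ?_ fun _ => ?_
    · rintro _ (b | b) ⟨y, hya, hyb⟩ ⟨a, rfl⟩
      · exact absurd hyb (notMem_src_inl_of_mem_tgt_inr hBm hya)
      · exact ⟨b, rfl⟩
    · rcases hhead : l.head hne with a | a
      · rw [hhead] at hsrc
        exact absurd hsrc (notMem_src_inl_of_mem_tgt_inr hBm htgt)
      · exact ⟨a, rfl⟩

end Cospan

/-- If `m → G ← n` and `n → H ← p` are monogamous acyclic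
cospans of hypergraphs with discrete interfaces, then their composite cospan
`m → G +_n H ← p` (obtained by pushout) is monogamous and acyclic. -/
theorem composition_monogamous_acyclic {m n p : Type} [Finite m] [Finite n] [Finite p]
    (A : Cospan m n) (B : Cospan n p)
    (hAm : A.Monogamous) (hAa : A.Acyclic) (hBm : B.Monogamous) (hBa : B.Acyclic) :
    (A.comp B).Monogamous ∧ (A.comp B).Acyclic :=
  ⟨hAm.comp hBm, Cospan.Acyclic.comp hAm hAa hBm hBa⟩

end SDRT
end

section
/- (Characterisation of the image of the interpretation) Let Σ be a monoidal signature. A cospan n → G ← m of Σ-labelled hypergraphs with finite carrier is isomorphic to the interpretation ⟦t⟧ of some Σ-term t : n → m if and only if it is monogamous and acyclic. -/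
namespace SDRT

/-! ### Labelled hypergraphs -/

/-- A monoidal signature: a set of operation symbols, each with an arity and a
coarity. -/
structure MonSig : Type 1 where
  ops : Type
  ar : ops → ℕ
  coar : ops → ℕ

/-- A `Σ`-labelled hypergraph: each hyperedge carries a label whose arity and
coarity match the numbers of sources and targets of the hyperedge. -/
structure LHyp (S : MonSig) extends Hyp where
  label : E → S.ops
  src_len : ∀ e, (src e).length = S.ar (label e)
  tgt_len : ∀ e, (tgt e).length = S.coar (label e)

/-- A homomorphism of `Σ`-labelled hypergraphs. -/
structure LHom {S : MonSig} (G H : LHyp S) where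
  nodeMap : G.V → H.V
  edgeMap : G.E → H.E
  src_eq : ∀ e, H.src (edgeMap e) = (G.src e).map nodeMap
  tgt_eq : ∀ e, H.tgt (edgeMap e) = (G.tgt e).map nodeMap
  label_eq : ∀ e, H.label (edgeMap e) = G.label e

/-- Composition (diagrammatic order) of homomorphisms. -/
def LHom.comp {S : MonSig} {G H K : LHyp S} (f : LHom G H) (g : LHom H K) : LHom G K where
  nodeMap := g.nodeMap ∘ f.nodeMap
  edgeMap := g.edgeMap ∘ f.edgeMap
  src_eq := by intro e; simp only [Function.comp_apply, g.src_eq, f.src_eq, List.map_map]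
  tgt_eq := by intro e; simp only [Function.comp_apply, g.tgt_eq, f.tgt_eq, List.map_map]
  label_eq := by intro e; simp only [Function.comp_apply, g.label_eq, f.label_eq]

/-- The underlying homomorphism of unlabelled hypergraphs. -/
def LHom.toHypHom {S : MonSig} {G H : LHyp S} (f : LHom G H) : HypHom G.toHyp H.toHyp :=
  ⟨f.nodeMap, f.edgeMap, f.src_eq, f.tgt_eq⟩

/-- The discrete `Σ`-labelled hypergraph on a set `I` of nodes (no hyperedges). -/
def discreteLHyp (S : MonSig) (I : Type) : LHyp S where
  V := I
  E := Empty
  src := Empty.elim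
  tgt := Empty.elim
  label := fun e => e.elim
  src_len := fun e => e.elim
  tgt_len := fun e => e.elim

/-- A homomorphism out of a discrete hypergraph is just a function on nodes. -/
def discreteHom {S : MonSig} {I : Type} (C : LHyp S) (c : I → C.V) :
    LHom (discreteLHyp S I) C where
  nodeMap := c
  edgeMap := Empty.elim
  src_eq := fun e => e.elim
  tgt_eq := fun e => e.elim
  label_eq := fun e => e.elim

/-- The square `f ; inA = g ; inB` is a pushout of `Σ`-labelled hypergraphs. -/
def IsPushout {S : MonSig} {X A B P : LHyp S} (f : LHom X A) (g : LHom X B)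
    (inA : LHom A P) (inB : LHom B P) : Prop :=
  f.comp inA = g.comp inB ∧
  ∀ (W : LHyp S) (u : LHom A W) (w : LHom B W), f.comp u = g.comp w →
    ∃! t : LHom P W, inA.comp t = u ∧ inB.comp t = w

/-- A cospan of `Σ`-labelled hypergraphs with discrete interfaces. -/
structure LCospan (S : MonSig) (m n : Type) : Type 1 where
  G : LHyp S
  inp : m → G.V
  out : n → G.V

namespace LCospan

/-- The underlying unlabelled cospan. -/
def toCospan {S : MonSig} {m n : Type} (A : LCospan S m n) : Cospan m n :=
  ⟨A.G.toHyp, A.inp, A.out⟩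

def Monogamous {S : MonSig} {m n : Type} (A : LCospan S m n) : Prop := A.toCospan.Monogamous

def Acyclic {S : MonSig} {m n : Type} (A : LCospan S m n) : Prop := A.G.toHyp.Acyclic

/-- Composition of labelled cospans by pushout (gluing along the common interface). -/
def comp {S : MonSig} {m n p : Type} (A : LCospan S m n) (B : LCospan S n p) :
    LCospan S m p where
  G := { V := Quot (fun x y : A.G.V ⊕ B.G.V =>
                      ∃ k : n, x = Sum.inl (A.out k) ∧ y = Sum.inr (B.inp k))
         E := A.G.E ⊕ B.G.E
         src := Sum.elim (fun e => (A.G.src e).map (fun v => Quot.mk _ (Sum.inl v)))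
                         (fun e => (B.G.src e).map (fun v => Quot.mk _ (Sum.inr v)))
         tgt := Sum.elim (fun e => (A.G.tgt e).map (fun v => Quot.mk _ (Sum.inl v)))
                         (fun e => (B.G.tgt e).map (fun v => Quot.mk _ (Sum.inr v)))
         label := Sum.elim A.G.label B.G.label
         src_len := by rintro (e | e) <;> simp [A.G.src_len, B.G.src_len]
         tgt_len := by rintro (e | e) <;> simp [A.G.tgt_len, B.G.tgt_len] }
  inp := fun x => Quot.mk _ (Sum.inl (A.inp x))
  out := fun y => Quot.mk _ (Sum.inr (B.out y))

/-- Monoidal product (disjoint union) of labelled cospans. -/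
def tensor {S : MonSig} {m₁ n₁ m₂ n₂ : Type} (A : LCospan S m₁ n₁) (B : LCospan S m₂ n₂) :
    LCospan S (m₁ ⊕ m₂) (n₁ ⊕ n₂) where
  G := { V := A.G.V ⊕ B.G.V
         E := A.G.E ⊕ B.G.E
         src := Sum.elim (fun e => (A.G.src e).map Sum.inl) (fun e => (B.G.src e).map Sum.inr)
         tgt := Sum.elim (fun e => (A.G.tgt e).map Sum.inl) (fun e => (B.G.tgt e).map Sum.inr)
         label := Sum.elim A.G.label B.G.label
         src_len := by rintro (e | e) <;> simp [A.G.src_len, B.G.src_len]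
         tgt_len := by rintro (e | e) <;> simp [A.G.tgt_len, B.G.tgt_len] }
  inp := Sum.elim (fun x => Sum.inl (A.inp x)) (fun x => Sum.inr (B.inp x))
  out := Sum.elim (fun y => Sum.inl (A.out y)) (fun y => Sum.inr (B.out y))

/-- Reindexing of the interfaces of a cospan along functions. -/
def reind {S : MonSig} {m n m' n' : Type} (A : LCospan S m n) (f : m' → m) (g : n' → n) :
    LCospan S m' n' :=
  ⟨A.G, A.inp ∘ f, A.out ∘ g⟩

end LCospan

/-- An isomorphism of labelled cospans. -/
structure LCospanIso {S : MonSig} {m n : Type} (A B : LCospan S m n) where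
  nodeEquiv : A.G.V ≃ B.G.V
  edgeEquiv : A.G.E ≃ B.G.E
  src_eq : ∀ e, B.G.src (edgeEquiv e) = (A.G.src e).map nodeEquiv
  tgt_eq : ∀ e, B.G.tgt (edgeEquiv e) = (A.G.tgt e).map nodeEquiv
  label_eq : ∀ e, B.G.label (edgeEquiv e) = A.G.label e
  inp_eq : ∀ x, nodeEquiv (A.inp x) = B.inp x
  out_eq : ∀ y, nodeEquiv (A.out y) = B.out y

/-- `A` is a monogamous acyclic cospan. -/
def MonAcyclic {S : MonSig} {m n : Type} (A : LCospan S m n) : Prop :=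
  A.Monogamous ∧ A.Acyclic

/-- `(C, c, g)` is a pushout complement of the mono `f : L → G` along the
interface `i + j → L` of the rule. -/
def IsPushoutComplement {S : MonSig} {i j n m : Type} (L : LCospan S i j) (Gc : LCospan S n m)
    (f : LHom L.G Gc.G) (C : LHyp S) (c : i ⊕ j → C.V) (g : LHom C Gc.G) : Prop :=
  IsPushout (discreteHom L.G (Sum.elim L.inp L.out)) (discreteHom C c) f g

/-- `(C, c, g)` is a boundary complement: a pushout complement in which `c` is mono
and there are `d₁ : n → C`, `d₂ : m → C` commuting with the interface of `G` such
that the cospan `j + n → C ← m + i` is monogamous. -/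
def IsBoundaryComplement {S : MonSig} {i j n m : Type} (L : LCospan S i j) (Gc : LCospan S n m)
    (f : LHom L.G Gc.G) (C : LHyp S) (c : i ⊕ j → C.V) (g : LHom C Gc.G) : Prop :=
  IsPushoutComplement L Gc f C c g ∧ Function.Injective c ∧
  ∃ (d₁ : n → C.V) (d₂ : m → C.V),
    (∀ x, g.nodeMap (d₁ x) = Gc.inp x) ∧ (∀ y, g.nodeMap (d₂ y) = Gc.out y) ∧
    (LCospan.mk C (Sum.elim (fun y : j => c (Sum.inr y)) d₁)
                  (Sum.elim d₂ (fun x : i => c (Sum.inl x)))).Monogamous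

/-- A convex DPO rewriting step from `D ← n+m` to `E ← n+m` using the rule
`L ← i+j → R`: a mono matching `f : L → D` with convex image, and a boundary
(pushout) complement `C` such that pasting `R` back along `i+j` yields `E`,
with all interfaces preserved. -/
def ConvexStep {S : MonSig} {i j n m : Type} (Lr Rr : LCospan S i j)
    (D E : LCospan S n m) : Prop :=
  ∃ (f : LHom Lr.G D.G) (C : LHyp S) (c : i ⊕ j → C.V) (q : n ⊕ m → C.V)
    (g : LHom C D.G) (r : LHom Rr.G E.G) (h : LHom C E.G),
    Function.Injective f.nodeMap ∧ Function.Injective f.edgeMap ∧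
    f.toHypHom.image.Convex ∧
    IsPushout (discreteHom Lr.G (Sum.elim Lr.inp Lr.out)) (discreteHom C c) f g ∧
    IsPushout (discreteHom Rr.G (Sum.elim Rr.inp Rr.out)) (discreteHom C c) r h ∧
    (∀ x, g.nodeMap (q (Sum.inl x)) = D.inp x) ∧
    (∀ y, g.nodeMap (q (Sum.inr y)) = D.out y) ∧
    (∀ x, h.nodeMap (q (Sum.inl x)) = E.inp x) ∧
    (∀ y, h.nodeMap (q (Sum.inr y)) = E.out y) ∧
    Function.Injective c ∧
    (LCospan.mk C (Sum.elim (fun y : j => c (Sum.inr y)) (fun x : n => q (Sum.inl x)))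
                  (Sum.elim (fun y : m => q (Sum.inr y)) (fun x : i => c (Sum.inl x)))).Monogamous

/-! ### Σ-terms, the SMC congruence, and the interpretation into cospans -/

/-- Terms over a monoidal signature, generated by the operations, identities,
symmetries, sequential composition and monoidal product. -/
inductive Term (S : MonSig) : ℕ → ℕ → Type where
  | op (o : S.ops) : Term S (S.ar o) (S.coar o)
  | id (n : ℕ) : Term S n n
  | symm (m n : ℕ) : Term S (m + n) (n + m)
  | seq {m n p : ℕ} : Term S m n → Term S n p → Term S m p
  | par {m₁ n₁ m₂ n₂ : ℕ} : Term S m₁ n₁ → Term S m₂ n₂ → Term S (m₁ + m₂) (n₁ + n₂)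

/-- Transport of a term along equalities of its (co)arities. -/
def castTerm {S : MonSig} {m m' n n' : ℕ} (h₁ : m = m') (h₂ : n = n')
    (t : Term S m n) : Term S m' n' := h₁ ▸ h₂ ▸ t

/-- The congruence on terms generated by the laws of symmetric strict monoidal
categories. -/
inductive SMC (S : MonSig) : {m n : ℕ} → Term S m n → Term S m n → Prop where
  | refl {m n} (t : Term S m n) : SMC S t t
  | symm' {m n} {t u : Term S m n} : SMC S t u → SMC S u t
  | trans {m n} {t u v : Term S m n} : SMC S t u → SMC S u v → SMC S t v
  | seq_congr {m n p} {t t' : Term S m n} {u u' : Term S n p} :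
      SMC S t t' → SMC S u u' → SMC S (t.seq u) (t'.seq u')
  | par_congr {m₁ n₁ m₂ n₂} {t t' : Term S m₁ n₁} {u u' : Term S m₂ n₂} :
      SMC S t t' → SMC S u u' → SMC S (t.par u) (t'.par u')
  | seq_assoc {m n p q} (t : Term S m n) (u : Term S n p) (v : Term S p q) :
      SMC S ((t.seq u).seq v) (t.seq (u.seq v))
  | id_seq {m n} (t : Term S m n) : SMC S ((Term.id m).seq t) t
  | seq_id {m n} (t : Term S m n) : SMC S (t.seq (Term.id n)) t
  | par_assoc {m₁ n₁ m₂ n₂ m₃ n₃} (t : Term S m₁ n₁) (u : Term S m₂ n₂) (v : Term S m₃ n₃) :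
      SMC S (castTerm (Nat.add_assoc m₁ m₂ m₃) (Nat.add_assoc n₁ n₂ n₃) ((t.par u).par v))
            (t.par (u.par v))
  | id_zero_par {m n} (t : Term S m n) :
      SMC S (castTerm (Nat.zero_add m) (Nat.zero_add n) ((Term.id 0).par t)) t
  | par_id_zero {m n} (t : Term S m n) : SMC S (t.par (Term.id 0)) t
  | interchange {m₁ n₁ p₁ m₂ n₂ p₂} (s : Term S m₁ n₁) (u : Term S n₁ p₁)
      (t : Term S m₂ n₂) (v : Term S n₂ p₂) :
      SMC S ((s.seq u).par (t.seq v)) ((s.par t).seq (u.par v))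
  | id_par_id (m n : ℕ) : SMC S ((Term.id m).par (Term.id n)) (Term.id (m + n))
  | symm_symm (m n : ℕ) : SMC S ((Term.symm m n).seq (Term.symm n m)) (Term.id (m + n))
  | symm_hexagon (m n o : ℕ) :
      SMC S ((castTerm rfl (Nat.add_assoc n m o) ((Term.symm m n).par (Term.id o))).seq
              ((Term.id n).par (Term.symm m o)))
            (castTerm (Nat.add_assoc m n o).symm (Nat.add_assoc n o m) (Term.symm m (n + o)))
  | symm_nat {o n : ℕ} (s : Term S o n) (m : ℕ) :
      SMC S ((s.par (Term.id m)).seq (Term.symm n m)) ((Term.symm o m).seq ((Term.id m).par s))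

/-- The cospan interpreting a generator `o : k → l`: the carrier has `k + l`
nodes and a single `o`-labelled hyperedge whose ordered sources are the interface
inputs and whose ordered targets are the interface outputs. -/
def genCospan {S : MonSig} (o : S.ops) : LCospan S (Fin (S.ar o)) (Fin (S.coar o)) where
  G := { V := Fin (S.ar o) ⊕ Fin (S.coar o)
         E := Unit
         src := fun _ => (List.finRange (S.ar o)).map Sum.inl
         tgt := fun _ => (List.finRange (S.coar o)).map Sum.inr
         label := fun _ => o
         src_len := by intro e; simp
         tgt_len := by intro e; simp }
  inp := Sum.inl
  out := Sum.inr

/-- The cospan interpreting `id_k`: discrete carrier with identity legs. -/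
def idLCospan (S : MonSig) (k : ℕ) : LCospan S (Fin k) (Fin k) :=
  ⟨discreteLHyp S (Fin k), id, id⟩

/-- The cospan interpreting the symmetry `σ_{m,n}`: discrete carrier on `m + n`
nodes, identity input leg, and the swap permutation as output leg. -/
def symmLCospan (S : MonSig) (m n : ℕ) : LCospan S (Fin (m + n)) (Fin (n + m)) :=
  ⟨discreteLHyp S (Fin (m + n)), id, fun x => finAddFlip x⟩

/-- The interpretation of terms as cospans of labelled hypergraphs with discrete
interfaces. -/
def interp {S : MonSig} : {m n : ℕ} → Term S m n → LCospan S (Fin m) (Fin n)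
  | _, _, .op o => genCospan o
  | _, _, .id k => idLCospan S k
  | _, _, .symm m n => symmLCospan S m n
  | _, _, .seq t u => (interp t).comp (interp u)
  | _, _, .par t u =>
      ((interp t).tensor (interp u)).reind (finSumFinEquiv.symm) (finSumFinEquiv.symm)

/-- A rewriting system on `Σ`-terms: a set of pairs of terms with equal arities
and coarities. -/
abbrev TermRules (S : MonSig) := Set (Σ i j : ℕ, Term S i j × Term S i j)

/-- Syntactic rewriting modulo the SMC laws: `d ⇒_R e` iff, modulo the SMC
congruence, `d = c₁ ; (id_k ⊕ l) ; c₂` and `e = c₁ ; (id_k ⊕ r) ; c₂` for some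
rule `(l, r)` in `R`. -/
def SynStep {S : MonSig} (R : TermRules S) {n m : ℕ} (d e : Term S n m) : Prop :=
  ∃ (i j : ℕ) (l r : Term S i j), (⟨i, j, (l, r)⟩ ∈ R) ∧
    ∃ (k : ℕ) (c₁ : Term S n (k + i)) (c₂ : Term S (k + j) m),
      SMC S d (c₁.seq (((Term.id k).par l).seq c₂)) ∧
      SMC S e (c₁.seq (((Term.id k).par r).seq c₂))

/-! ### Covers by interface points and hyperedge positions -/

/-- Every node is either the value of `f` at a unique point or the entry of a list `l e` at a
unique position, but not both. -/
def UniqueCover {X E V : Type} (f : X → V) (l : E → List V) : Prop :=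
  ∀ v, ∃! s : X ⊕ E × ℕ, Sum.elim (fun x => f x = v) (fun p => (l p.1)[p.2]? = some v) s

theorem uniqueCover_iff {X E V : Type} {f : X → V} {l : E → List V} :
    UniqueCover f l ↔ Function.Injective f ∧
      (∀ v ∈ Set.range f, {p : E × ℕ | (l p.1)[p.2]? = some v} = ∅) ∧
      (∀ v ∉ Set.range f, ∃! p : E × ℕ, (l p.1)[p.2]? = some v) := by
  constructor
  · intro h
    refine ⟨fun x y hxy => ?_, ?_, fun v hv => ?_⟩
    · exact Sum.inl_injective ((h (f y)).unique (y₁ := .inl x) (y₂ := .inl y) hxy rfl)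
    · rintro _ ⟨x, rfl⟩
      refine Set.eq_empty_iff_forall_notMem.2 fun p hp => ?_
      cases (h (f x)).unique (y₁ := .inl x) (y₂ := .inr p) rfl hp
    · obtain ⟨x | p, hs, hu⟩ := h v
      · exact (hv ⟨x, hs⟩).elim
      · exact ⟨p, hs, fun q hq => Sum.inr_injective (hu (.inr q) hq)⟩
  · rintro ⟨hf, h0, h1⟩ v
    by_cases hv : v ∈ Set.range f
    · obtain ⟨x, rfl⟩ := hv
      refine ⟨.inl x, rfl, ?_⟩
      rintro (y | p) hs
      · exact congrArg _ (hf hs)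
      · exact ((Set.eq_empty_iff_forall_notMem.1 (h0 _ ⟨x, rfl⟩)) p hs).elim
    · obtain ⟨p, hp, hu⟩ := h1 v hv
      refine ⟨.inr p, hp, ?_⟩
      rintro (y | q) hs
      · exact (hv ⟨y, hs⟩).elim
      · exact congrArg _ (hu q hs)

namespace UniqueCover

variable {X Y E F V W U : Type} {f : X → V} {l : E → List V}

theorem injective (h : UniqueCover f l) : Function.Injective f := (uniqueCover_iff.1 h).1

theorem notMem (h : UniqueCover f l) (x : X) (e : E) : f x ∉ l e := by
  intro hx
  obtain ⟨i, hi⟩ := List.mem_iff_getElem?.1 hx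
  cases (h (f x)).unique (y₁ := .inl x) (y₂ := .inr (e, i)) rfl hi

theorem eq_of_getElem? (h : UniqueCover f l) {e e' : E} {i j : ℕ} {v : V}
    (hi : (l e)[i]? = some v) (hj : (l e')[j]? = some v) : e = e' ∧ i = j := by
  simpa using (h v).unique (y₁ := .inr (e, i)) (y₂ := .inr (e', j)) hi hj

theorem eq_of_mem (h : UniqueCover f l) {e e' : E} {v : V} (hv : v ∈ l e) (hv' : v ∈ l e') :
    e = e' := by
  obtain ⟨i, hi⟩ := List.mem_iff_getElem?.1 hv
  obtain ⟨j, hj⟩ := List.mem_iff_getElem?.1 hv'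
  exact (h.eq_of_getElem? hi hj).1

theorem exists_or (h : UniqueCover f l) (v : V) : (∃ x, f x = v) ∨ ∃ e, v ∈ l e := by
  obtain ⟨x | p, hs, -⟩ := h v
  · exact .inl ⟨x, hs⟩
  · exact .inr ⟨p.1, List.mem_iff_getElem?.2 ⟨p.2, hs⟩⟩

theorem congr (h : UniqueCover f l) (eX : Y ≃ X) (eE : F ≃ E) (eV : V ≃ W) {f' : Y → W}
    {l' : F → List W} (hf : ∀ y, f' y = eV (f (eX y)))
    (hl : ∀ e, l' e = (l (eE e)).map eV) : UniqueCover f' l' := by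
  intro w
  have key : ∀ s : Y ⊕ F × ℕ,
      Sum.elim (fun x => f' x = w) (fun p => (l' p.1)[p.2]? = some w) s ↔
      Sum.elim (fun x => f x = eV.symm w) (fun p => (l p.1)[p.2]? = some (eV.symm w))
        (Equiv.sumCongr eX (Equiv.prodCongr eE (Equiv.refl ℕ)) s) := by
    rintro (y | ⟨e, i⟩)
    · simp [hf, Equiv.eq_symm_apply]
    · suffices (∃ a, (l (eE e))[i]? = some a ∧ eV a = w) ↔ (l (eE e))[i]? = some (eV.symm w) by
        simpa [hl]
      exact ⟨fun ⟨a, ha, haw⟩ => by rw [ha, ← haw, Equiv.symm_apply_apply],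
        fun ha => ⟨_, ha, eV.apply_symm_apply w⟩⟩
  simp only [key]
  exact (Equiv.existsUnique_congr_right _).2 (h (eV.symm w))

/-- Gluing along a common interface `K` preserves unique covers, provided that the interface
points of the second cover are exactly the glued nodes. -/
theorem glue {K : Type} {g : K → W} {k : F → List W} (hf : UniqueCover f l)
    (hg : UniqueCover g k) {p : V → U} {q : W → U} (hp : Function.Injective p)
    (hq : Function.Injective q) (hc : ∀ u, (∃ v, p v = u) ∨ ∃ w, q w = u) (r : K → V)
    (ho : ∀ v w, p v = q w ↔ ∃ x, v = r x ∧ w = g x) :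
    UniqueCover (p ∘ f) (Sum.elim (fun e => (l e).map p) (fun e => (k e).map q)) := by
  intro u
  by_cases hu : ∃ v, p v = u
  · obtain ⟨v, rfl⟩ := hu
    obtain ⟨s, hs, hu⟩ := hf v
    refine ⟨Sum.map id (Prod.map Sum.inl id) s, ?_, ?_⟩
    · rcases s with x | ⟨e, i⟩
      · exact congrArg p hs
      · simpa using ⟨v, hs, rfl⟩
    · rintro (x | ⟨e | e, i⟩) ht
      · rw [← hu (.inl x) (hp ht)]; rfl
      · obtain ⟨w, hw, hwv⟩ : ∃ w, (l e)[i]? = some w ∧ p w = p v := by simpa using ht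
        rw [← hu (.inr (e, i)) (hp hwv ▸ hw)]; rfl
      · obtain ⟨w, hw, hwv⟩ : ∃ w, (k e)[i]? = some w ∧ q w = p v := by simpa using ht
        obtain ⟨x, -, rfl⟩ := (ho v w).1 hwv.symm
        exact (hg.notMem x e (List.mem_iff_getElem?.2 ⟨i, hw⟩)).elim
  · obtain ⟨w, rfl⟩ := (hc u).resolve_left hu
    obtain ⟨x | ⟨e, i⟩, hs, hw⟩ := hg w
    · exact (hu ⟨r x, (ho _ _).2 ⟨x, rfl, hs.symm⟩⟩).elim
    · refine ⟨.inr (.inr e, i), by simpa using ⟨w, hs, rfl⟩, ?_⟩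
      rintro (x | ⟨e' | e', j⟩) ht
      · exact (hu ⟨_, ht⟩).elim
      · obtain ⟨v, -, hv⟩ : ∃ v, (l e')[j]? = some v ∧ p v = q w := by simpa using ht
        exact (hu ⟨v, hv⟩).elim
      · obtain ⟨w', hw', hww⟩ : ∃ w', (k e')[j]? = some w' ∧ q w' = q w := by simpa using ht
        have := Sum.inr_injective (hw (.inr (e', j)) (hq hww ▸ hw'))
        simp_all

theorem sum {g : Y → W} {k : F → List W} (hf : UniqueCover f l) (hg : UniqueCover g k) :
    UniqueCover (Sum.elim (fun x => (Sum.inl (f x) : V ⊕ W)) (fun y => Sum.inr (g y)))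
      (Sum.elim (fun e => (l e).map Sum.inl) (fun e => (k e).map Sum.inr)) := by
  rintro (v | w)
  · obtain ⟨s, hs, hu⟩ := hf v
    refine ⟨Sum.map Sum.inl (Prod.map Sum.inl id) s, ?_, ?_⟩
    · rcases s with x | ⟨e, i⟩
      · exact congrArg Sum.inl hs
      · simpa using hs
    · rintro ((x | x) | ⟨e | e, i⟩) ht
      · rw [← hu (.inl x) (by simpa using ht)]; rfl
      · simp at ht
      · rw [← hu (.inr (e, i)) (by simpa using ht)]; rfl
      · simp at ht
  · obtain ⟨s, hs, hu⟩ := hg w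
    refine ⟨Sum.map Sum.inr (Prod.map Sum.inr id) s, ?_, ?_⟩
    · rcases s with x | ⟨e, i⟩
      · exact congrArg Sum.inr hs
      · simpa using hs
    · rintro ((x | x) | ⟨e | e, i⟩) ht
      · simp at ht
      · rw [← hu (.inl x) (by simpa using ht)]; rfl
      · simp at ht
      · rw [← hu (.inr (e, i)) (by simpa using ht)]; rfl

theorem of_isEmpty [IsEmpty E] (f : X ≃ V) (l : E → List V) : UniqueCover f l := by
  refine fun v => ⟨.inl (f.symm v), f.apply_symm_apply v, ?_⟩
  rintro (x | ⟨e, -⟩) h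
  · exact congrArg _ (f.eq_symm_apply.2 h)
  · exact isEmptyElim e

theorem inl_inr (a b : ℕ) : UniqueCover (Sum.inl : Fin a → Fin a ⊕ Fin b)
    (fun _ : Unit => (List.finRange b).map Sum.inr) := by
  rintro (i | j)
  · refine ⟨.inl i, rfl, ?_⟩
    rintro (x | ⟨e, k⟩) h
    · exact congrArg _ (Sum.inl_injective h)
    · simp at h
  · refine ⟨.inr ((), j), by simp, ?_⟩
    rintro (x | ⟨e, k⟩) h
    · simp at h
    · obtain ⟨_, rfl⟩ : ∃ hk, (⟨k, hk⟩ : Fin b) = j := by simpa [List.getElem?_eq_some_iff] using h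
      rfl

end UniqueCover

/-! ### Acyclicity through rank functions -/

/-- A function on hyperedges that strictly increases along successors. -/
def Hyp.IsRank (G : Hyp) (ρ : G.E → ℕ) : Prop :=
  ∀ h h' v, v ∈ G.tgt h → v ∈ G.src h' → ρ h < ρ h'

theorem Hyp.IsRank.acyclic {G : Hyp} {ρ : G.E → ℕ} (hρ : G.IsRank ρ) : G.Acyclic := by
  rintro v l ⟨hne, hch, hs, ht⟩
  have hlt := hρ _ _ v ht hs
  have hch' : l.IsChain (fun a b => ρ a < ρ b) :=
    List.IsChain.imp (fun a b ⟨w, hw, hw'⟩ => hρ a b w hw hw') hch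
  have : IsTrans G.E (fun a b => ρ a < ρ b) := ⟨fun _ _ _ => lt_trans⟩
  have hpw := List.isChain_iff_pairwise.1 hch'
  obtain ⟨a, t, rfl⟩ := List.exists_cons_of_ne_nil hne
  rcases List.mem_cons.1 (List.getLast_mem hne) with h | h
  · rw [h] at hlt
    exact lt_irrefl _ hlt
  · exact lt_asymm hlt ((List.pairwise_cons.1 hpw).1 _ h)

theorem Hyp.Acyclic.exists_isRank {G : Hyp} [Finite G.E] (hG : G.Acyclic) :
    ∃ ρ, G.IsRank ρ := by
  have irrefl : ∀ h, ¬ Relation.TransGen G.Successor h h := by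
    intro h hh
    obtain ⟨h', hr, v, hv, hv'⟩ := Relation.TransGen.tail'_iff.1 hh
    obtain ⟨l, hl, hlast⟩ := List.exists_isChain_cons_of_relationReflTransGen hr
    exact hG v (h :: l) ⟨List.cons_ne_nil _ _, hl, hv', hlast ▸ hv⟩
  refine ⟨fun h => {x | Relation.TransGen G.Successor x h}.ncard, fun h h' v hv hv' => ?_⟩
  have hs : G.Successor h h' := ⟨v, hv, hv'⟩
  exact Set.ncard_lt_ncard (Set.ssubset_iff_of_subset (fun x hx => hx.tail hs) |>.2
    ⟨h, .single hs, irrefl h⟩) (Set.toFinite _)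

/-! ### Isomorphisms and gluings of labelled cospans -/

namespace LCospanIso

variable {S : MonSig} {X Y : Type} {A B C : LCospan S X Y}

def refl (A : LCospan S X Y) : LCospanIso A A where
  nodeEquiv := Equiv.refl _
  edgeEquiv := Equiv.refl _
  src_eq := by simp
  tgt_eq := by simp
  label_eq := by simp
  inp_eq := by simp
  out_eq := by simp

def trans (i : LCospanIso A B) (j : LCospanIso B C) : LCospanIso A C where
  nodeEquiv := i.nodeEquiv.trans j.nodeEquiv
  edgeEquiv := i.edgeEquiv.trans j.edgeEquiv
  src_eq := by simp [i.src_eq, j.src_eq]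
  tgt_eq := by simp [i.tgt_eq, j.tgt_eq]
  label_eq := by simp [i.label_eq, j.label_eq]
  inp_eq := by simp [i.inp_eq, j.inp_eq]
  out_eq := by simp [i.out_eq, j.out_eq]

theorem map_symm_eq_iff {V W : Type} (e : V ≃ W) {l : List V} {k : List W} :
    l = k.map e.symm ↔ k = l.map e := by
  constructor <;> rintro rfl <;> simp

def symm (i : LCospanIso A B) : LCospanIso B A where
  nodeEquiv := i.nodeEquiv.symm
  edgeEquiv := i.edgeEquiv.symm
  src_eq e := by rw [map_symm_eq_iff, ← i.src_eq, Equiv.apply_symm_apply]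
  tgt_eq e := by rw [map_symm_eq_iff, ← i.tgt_eq, Equiv.apply_symm_apply]
  label_eq e := by rw [← i.label_eq, Equiv.apply_symm_apply]
  inp_eq x := by rw [← i.inp_eq, Equiv.symm_apply_apply]
  out_eq x := by rw [← i.out_eq, Equiv.symm_apply_apply]

def reind {X' Y' : Type} (i : LCospanIso A B) (f : X' → X) (g : Y' → Y) :
    LCospanIso (A.reind f g) (B.reind f g) where
  nodeEquiv := i.nodeEquiv
  edgeEquiv := i.edgeEquiv
  src_eq := i.src_eq
  tgt_eq := i.tgt_eq
  label_eq := i.label_eq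
  inp_eq x := i.inp_eq (f x)
  out_eq y := i.out_eq (g y)

theorem map_sumInl {V V' W W' : Type} {g : V ≃ V'} (h : W ≃ W') {l : List V} {k : List V'}
    (hk : k = l.map g) : k.map Sum.inl = (l.map Sum.inl).map (Equiv.sumCongr g h) := by
  simp [hk]

theorem map_sumInr {V V' W W' : Type} {g : V ≃ V'} (h : W ≃ W') {l : List V} {k : List V'}
    (hk : k = l.map g) : k.map Sum.inr = (l.map Sum.inr).map (Equiv.sumCongr h g) := by
  simp [hk]

def tensor {X' Y' : Type} {A' B' : LCospan S X' Y'} (i : LCospanIso A B)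
    (j : LCospanIso A' B') : LCospanIso (A.tensor A') (B.tensor B') where
  nodeEquiv := Equiv.sumCongr i.nodeEquiv j.nodeEquiv
  edgeEquiv := Equiv.sumCongr i.edgeEquiv j.edgeEquiv
  src_eq := by
    rintro (e | e)
    · exact map_sumInl j.nodeEquiv (i.src_eq e)
    · exact map_sumInr i.nodeEquiv (j.src_eq e)
  tgt_eq := by
    rintro (e | e)
    · exact map_sumInl j.nodeEquiv (i.tgt_eq e)
    · exact map_sumInr i.nodeEquiv (j.tgt_eq e)
  label_eq := by
    rintro (e | e)
    · exact i.label_eq e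
    · exact j.label_eq e
  inp_eq := by
    rintro (x | x)
    · exact congrArg Sum.inl (i.inp_eq x)
    · exact congrArg Sum.inr (j.inp_eq x)
  out_eq := by
    rintro (x | x)
    · exact congrArg Sum.inl (i.out_eq x)
    · exact congrArg Sum.inr (j.out_eq x)

end LCospanIso

/-- `C` is obtained by gluing `A` and `B` along their common interface, both carriers being
embedded in the carrier of `C`. -/
structure Gluing {S : MonSig} {X Y Z : Type} (A : LCospan S X Y) (B : LCospan S Y Z)
    (C : LCospan S X Z) where
  left : A.G.V → C.G.V
  right : B.G.V → C.G.V
  edge : A.G.E ⊕ B.G.E ≃ C.G.E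
  left_injective : Function.Injective left
  right_injective : Function.Injective right
  cover : ∀ v, (∃ a, left a = v) ∨ ∃ b, right b = v
  overlap : ∀ a b, left a = right b ↔ ∃ k, a = A.out k ∧ b = B.inp k
  src_left : ∀ e, C.G.src (edge (.inl e)) = (A.G.src e).map left
  src_right : ∀ e, C.G.src (edge (.inr e)) = (B.G.src e).map right
  tgt_left : ∀ e, C.G.tgt (edge (.inl e)) = (A.G.tgt e).map left
  tgt_right : ∀ e, C.G.tgt (edge (.inr e)) = (B.G.tgt e).map right
  label_left : ∀ e, C.G.label (edge (.inl e)) = A.G.label e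
  label_right : ∀ e, C.G.label (edge (.inr e)) = B.G.label e
  inp_eq : ∀ x, C.inp x = left (A.inp x)
  out_eq : ∀ z, C.out z = right (B.out z)

namespace Gluing

variable {S : MonSig} {X Y Z : Type} {A : LCospan S X Y} {B : LCospan S Y Z} {C : LCospan S X Z}

theorem nonempty_iso_comp (γ : Gluing A B C) : Nonempty (LCospanIso (A.comp B) C) := by
  let φ : (A.comp B).G.V → C.G.V := Quot.lift (Sum.elim γ.left γ.right) (by
    rintro _ _ ⟨k, rfl, rfl⟩
    exact (γ.overlap _ _).2 ⟨k, rfl, rfl⟩)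
  have hφ : Function.Bijective φ := by
    constructor
    · rintro ⟨a | b⟩ ⟨a' | b'⟩ h
      · rw [γ.left_injective h]
      · obtain ⟨k, rfl, rfl⟩ := (γ.overlap _ _).1 h
        exact Quot.sound ⟨k, rfl, rfl⟩
      · obtain ⟨k, rfl, rfl⟩ := (γ.overlap _ _).1 h.symm
        exact (Quot.sound ⟨k, rfl, rfl⟩).symm
      · rw [γ.right_injective h]
    · intro v
      rcases γ.cover v with ⟨a, h⟩ | ⟨b, h⟩
      · exact ⟨Quot.mk _ (.inl a), h⟩
      · exact ⟨Quot.mk _ (.inr b), h⟩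
  refine ⟨⟨Equiv.ofBijective φ hφ, γ.edge, ?_, ?_, ?_, fun x => (γ.inp_eq x).symm,
    fun z => (γ.out_eq z).symm⟩⟩
  · rintro (e | e)
    · exact (γ.src_left e).trans (List.map_map (g := φ) (f := fun v => Quot.mk _ (.inl v))).symm
    · exact (γ.src_right e).trans (List.map_map (g := φ) (f := fun v => Quot.mk _ (.inr v))).symm
  · rintro (e | e)
    · exact (γ.tgt_left e).trans (List.map_map (g := φ) (f := fun v => Quot.mk _ (.inl v))).symm
    · exact (γ.tgt_right e).trans (List.map_map (g := φ) (f := fun v => Quot.mk _ (.inr v))).symm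
  · rintro (e | e)
    · exact γ.label_left e
    · exact γ.label_right e

/-- The embeddings of the carriers into the pushout composite, for injective interface legs. -/
theorem nonempty_comp (hA : Function.Injective A.out) (hB : Function.Injective B.inp) :
    Nonempty (Gluing A B (A.comp B)) := by
  classical
  let r : A.G.V ⊕ B.G.V → A.G.V ⊕ B.G.V → Prop :=
    fun x y => ∃ k : Y, x = Sum.inl (A.out k) ∧ y = Sum.inr (B.inp k)
  let φ : A.G.V ⊕ B.G.V → A.G.V ⊕ B.G.V := Sum.elim Sum.inl
    (fun b => if h : ∃ k, b = B.inp k then .inl (A.out h.choose) else .inr b)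
  have hφk (k) : φ (.inr (B.inp k)) = .inl (A.out k) := by
    have h : ∃ k', B.inp k = B.inp k' := ⟨k, rfl⟩
    simp only [φ, Sum.elim_inr, dif_pos h, ← hB h.choose_spec]
  have hφ {x y} (h : Quot.mk r x = Quot.mk r y) : φ x = φ y := by
    refine congrArg (Quot.lift φ ?_) h
    rintro _ _ ⟨k, rfl, rfl⟩
    exact (hφk k).symm
  have hφr (b) : (∃ k, b = B.inp k ∧ φ (.inr b) = .inl (A.out k)) ∨
      φ (.inr b) = .inr b := by
    by_cases h : ∃ k, b = B.inp k
    · obtain ⟨k, rfl⟩ := h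
      exact .inl ⟨k, rfl, hφk k⟩
    · exact .inr (by simp only [φ, Sum.elim_inr, dif_neg h])
  refine ⟨{
    left := fun a => Quot.mk _ (.inl a)
    right := fun b => Quot.mk _ (.inr b)
    edge := Equiv.refl _
    left_injective := fun a a' h => Sum.inl_injective (hφ h)
    right_injective := fun b b' h => ?_
    cover := ?_
    overlap := fun a b => ⟨fun h => ?_, ?_⟩
    src_left := fun _ => rfl
    src_right := fun _ => rfl
    tgt_left := fun _ => rfl
    tgt_right := fun _ => rfl
    label_left := fun _ => rfl
    label_right := fun _ => rfl
    inp_eq := fun _ => rfl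
    out_eq := fun _ => rfl }⟩
  · have h' := hφ h
    rcases hφr b with ⟨k, rfl, hk⟩ | hb <;> rcases hφr b' with ⟨k', rfl, hk'⟩ | hb'
    · rw [hk, hk'] at h'
      rw [hA (Sum.inl_injective h')]
    · simp [hk, hb'] at h'
    · simp [hk', hb] at h'
    · rw [hb, hb'] at h'
      exact Sum.inr_injective h'
  · rintro ⟨a | b⟩
    · exact .inl ⟨a, rfl⟩
    · exact .inr ⟨b, rfl⟩
  · have h' := hφ h
    rcases hφr b with ⟨k, rfl, hk⟩ | hb
    · rw [hk] at h'
      exact ⟨k, Sum.inl_injective h', rfl⟩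
    · simp [hb, φ] at h'
  · rintro ⟨k, rfl, rfl⟩
    exact Quot.sound ⟨k, rfl, rfl⟩

def congr {A' : LCospan S X Y} {B' : LCospan S Y Z} (γ : Gluing A B C) (i : LCospanIso A' A)
    (j : LCospanIso B' B) : Gluing A' B' C where
  left := γ.left ∘ i.nodeEquiv
  right := γ.right ∘ j.nodeEquiv
  edge := (Equiv.sumCongr i.edgeEquiv j.edgeEquiv).trans γ.edge
  left_injective := γ.left_injective.comp i.nodeEquiv.injective
  right_injective := γ.right_injective.comp j.nodeEquiv.injective
  cover v := by
    rcases γ.cover v with ⟨a, rfl⟩ | ⟨b, rfl⟩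
    · exact .inl ⟨i.nodeEquiv.symm a, by simp⟩
    · exact .inr ⟨j.nodeEquiv.symm b, by simp⟩
  overlap a b := by
    simp only [Function.comp_apply, γ.overlap, ← i.out_eq, ← j.inp_eq, EmbeddingLike.apply_eq_iff_eq]
  src_left e := by simp [γ.src_left, i.src_eq]
  src_right e := by simp [γ.src_right, j.src_eq]
  tgt_left e := by simp [γ.tgt_left, i.tgt_eq]
  tgt_right e := by simp [γ.tgt_right, j.tgt_eq]
  label_left e := by simp [γ.label_left, i.label_eq]
  label_right e := by simp [γ.label_right, j.label_eq]
  inp_eq x := by simp [γ.inp_eq, i.inp_eq]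
  out_eq z := by simp [γ.out_eq, j.out_eq]

def reind {X' Y' Z' : Type} (γ : Gluing A B C) (f : X' → X) (g : Y' ≃ Y) (h : Z' → Z) :
    Gluing (A.reind f g) (B.reind g h) (C.reind f h) where
  left := γ.left
  right := γ.right
  edge := γ.edge
  left_injective := γ.left_injective
  right_injective := γ.right_injective
  cover := γ.cover
  overlap a b := (γ.overlap a b).trans
    (Equiv.exists_congr_right (q := fun k => a = A.out k ∧ b = B.inp k) g).symm
  src_left := γ.src_left
  src_right := γ.src_right
  tgt_left := γ.tgt_left
  tgt_right := γ.tgt_right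
  label_left := γ.label_left
  label_right := γ.label_right
  inp_eq x := γ.inp_eq (f x)
  out_eq z := γ.out_eq (h z)

end Gluing

/-! ### Monogamous acyclic cospans -/

namespace LCospan

variable {S : MonSig} {X Y Z : Type}

theorem monogamous_iff (A : LCospan S X Y) :
    A.Monogamous ↔ UniqueCover A.inp A.G.tgt ∧ UniqueCover A.out A.G.src := by
  rw [uniqueCover_iff, uniqueCover_iff]
  constructor
  · rintro ⟨h₁, h₂, h₃, h₄, h₅, h₆⟩
    exact ⟨⟨h₁, h₃, h₄⟩, h₂, h₅, h₆⟩
  · rintro ⟨⟨h₁, h₃, h₄⟩, h₂, h₅, h₆⟩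
    exact ⟨h₁, h₂, h₃, h₄, h₅, h₆⟩

/-- A monogamous cospan whose carrier has a bounded rank function. -/
structure Ranked (A : LCospan S X Y) : Prop where
  cover_inp : UniqueCover A.inp A.G.tgt
  cover_out : UniqueCover A.out A.G.src
  exists_isRank : ∃ ρ : A.G.E → ℕ, A.G.IsRank ρ ∧ ∃ N, ∀ e, ρ e < N

namespace Ranked

theorem monogamous {A : LCospan S X Y} (hA : A.Ranked) : A.Monogamous :=
  A.monogamous_iff.2 ⟨hA.cover_inp, hA.cover_out⟩

theorem acyclic {A : LCospan S X Y} (hA : A.Ranked) : A.Acyclic :=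
  let ⟨_, h, _⟩ := hA.exists_isRank
  h.acyclic

theorem of_iso {A B : LCospan S X Y} (hA : A.Ranked) (i : LCospanIso B A) : B.Ranked where
  cover_inp := hA.cover_inp.congr (Equiv.refl X) i.edgeEquiv i.nodeEquiv.symm
    (fun x => by simp [← i.inp_eq]) (fun e => by simp [i.tgt_eq])
  cover_out := hA.cover_out.congr (Equiv.refl Y) i.edgeEquiv i.nodeEquiv.symm
    (fun x => by simp [← i.out_eq]) (fun e => by simp [i.src_eq])
  exists_isRank := by
    obtain ⟨ρ, hρ, N, hN⟩ := hA.exists_isRank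
    refine ⟨ρ ∘ i.edgeEquiv, fun e e' v hv hv' => ?_, N, fun e => hN _⟩
    refine hρ _ _ (i.nodeEquiv v) ?_ ?_
    · simpa [i.tgt_eq] using hv
    · simpa [i.src_eq] using hv'

theorem reind {A : LCospan S X Y} (hA : A.Ranked) {X' Y' : Type} (f : X' ≃ X) (g : Y' ≃ Y) :
    (A.reind f g).Ranked where
  cover_inp := hA.cover_inp.congr f (Equiv.refl _) (Equiv.refl _) (fun _ => rfl)
    (fun e => by simp [LCospan.reind])
  cover_out := hA.cover_out.congr g (Equiv.refl _) (Equiv.refl _) (fun _ => rfl)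
    (fun e => by simp [LCospan.reind])
  exists_isRank := hA.exists_isRank

theorem tensor {X' Y' : Type} {A : LCospan S X Y} {B : LCospan S X' Y'} (hA : A.Ranked)
    (hB : B.Ranked) : (A.tensor B).Ranked where
  cover_inp := hA.cover_inp.sum hB.cover_inp
  cover_out := hA.cover_out.sum hB.cover_out
  exists_isRank := by
    obtain ⟨ρ, hρ, N, hN⟩ := hA.exists_isRank
    obtain ⟨τ, hτ, M, hM⟩ := hB.exists_isRank
    refine ⟨Sum.elim ρ τ, ?_, max N M, ?_⟩
    · rintro (e | e) (e' | e') v hv hv' <;> obtain ⟨w, hw, rfl⟩ := List.mem_map.1 hv <;>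
        obtain ⟨w', hw', h⟩ := List.mem_map.1 hv'
      · exact hρ _ _ w hw (Sum.inl_injective h ▸ hw')
      · cases h
      · cases h
      · exact hτ _ _ w hw (Sum.inr_injective h ▸ hw')
    · rintro (e | e)
      · exact lt_max_of_lt_left (hN e)
      · exact lt_max_of_lt_right (hM e)

theorem of_gluing {A : LCospan S X Y} {B : LCospan S Y Z} {C : LCospan S X Z} (hA : A.Ranked)
    (hB : B.Ranked) (γ : Gluing A B C) : C.Ranked where
  cover_inp := (hA.cover_inp.glue hB.cover_inp γ.left_injective γ.right_injective γ.cover A.out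
    γ.overlap).congr (Equiv.refl X) γ.edge.symm (Equiv.refl _) (fun x => γ.inp_eq x) (fun e => by
      obtain ⟨e | e, rfl⟩ := γ.edge.surjective e
      · simp [γ.tgt_left]
      · simp [γ.tgt_right])
  cover_out := (hB.cover_out.glue hA.cover_out γ.right_injective γ.left_injective
    (fun v => (γ.cover v).symm) B.inp (fun b a => by
      rw [eq_comm, γ.overlap]; simp only [and_comm])).congr (Equiv.refl Z)
    (γ.edge.symm.trans (Equiv.sumComm _ _)) (Equiv.refl _) (fun x => γ.out_eq x) (fun e => by
      obtain ⟨e | e, rfl⟩ := γ.edge.surjective e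
      · simp [γ.src_left]
      · simp [γ.src_right])
  exists_isRank := by
    obtain ⟨ρ, hρ, N, hN⟩ := hA.exists_isRank
    obtain ⟨τ, hτ, M, hM⟩ := hB.exists_isRank
    refine ⟨Sum.elim ρ (fun e => N + τ e) ∘ γ.edge.symm, ?_, N + M, ?_⟩
    · intro e e' v hv hv'
      obtain ⟨e | e, rfl⟩ := γ.edge.surjective e <;>
        obtain ⟨e' | e', rfl⟩ := γ.edge.surjective e' <;>
        simp only [γ.src_left, γ.src_right, γ.tgt_left, γ.tgt_right, List.mem_map] at hv hv' <;>
        obtain ⟨w, hw, rfl⟩ := hv <;> obtain ⟨w', hw', h⟩ := hv'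
      · simpa using hρ _ _ w hw (γ.left_injective h ▸ hw')
      · simpa using (hN e).trans_le (Nat.le_add_right _ _)
      · obtain ⟨k, -, rfl⟩ := (γ.overlap _ _).1 h
        exact (hB.cover_inp.notMem _ _ hw).elim
      · simpa using hτ _ _ w hw (γ.right_injective h ▸ hw')
    · intro e
      obtain ⟨e | e, rfl⟩ := γ.edge.surjective e
      · simpa using (hN e).trans_le (Nat.le_add_right _ _)
      · simpa using hM e

theorem discrete {V : Type} (f : X ≃ V) (g : Y ≃ V) :
    (LCospan.mk (discreteLHyp S V) f g).Ranked where
  cover_inp := .of_isEmpty (E := Empty) f _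
  cover_out := .of_isEmpty (E := Empty) g _
  exists_isRank := ⟨Empty.elim, fun e => e.elim, 0, fun e => e.elim⟩

theorem gen (o : S.ops) : (genCospan o).Ranked where
  cover_inp := .inl_inr _ _
  cover_out := (UniqueCover.inl_inr (S.coar o) (S.ar o)).congr (Equiv.refl _) (Equiv.refl _)
    (Equiv.sumComm _ _) (fun _ => rfl)
    (fun _ => (List.map_map (g := Sum.swap) (f := Sum.inr)).symm)
  exists_isRank := ⟨fun _ => 0, fun e e' v hv hv' => by
    obtain ⟨w, hw, rfl⟩ := List.mem_map.1 hv
    obtain ⟨w', hw', h⟩ := List.mem_map.1 hv'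
    exact (Sum.inl_ne_inr h).elim, 1, fun _ => Nat.one_pos⟩

theorem interp {n m : ℕ} (t : Term S n m) : (interp t).Ranked := by
  induction t with
  | op o => exact gen o
  | id k => exact discrete (Equiv.refl _) (Equiv.refl _)
  | symm a b => exact discrete (Equiv.refl _) finAddFlip
  | seq t u ht hu =>
    obtain ⟨γ⟩ := Gluing.nonempty_comp ht.cover_out.injective hu.cover_inp.injective
    exact ht.of_gluing hu γ
  | par t u ht hu => exact (ht.tensor hu).reind _ _

end Ranked

end LCospan

/-! ### Realising cospans by terms -/

section Realisation

variable {S : MonSig} {X Y Z : Type}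

/-- A cospan isomorphic to the interpretation of a term. -/
def IsInterp {n m : ℕ} (c : LCospan S (Fin n) (Fin m)) : Prop :=
  ∃ t : Term S n m, Nonempty (LCospanIso c (interp t))

namespace IsInterp

variable {n m p : ℕ} {A : LCospan S (Fin n) (Fin m)} {B : LCospan S (Fin m) (Fin p)}
  {C : LCospan S (Fin n) (Fin p)}

theorem ranked (hA : IsInterp A) : A.Ranked :=
  let ⟨t, ⟨i⟩⟩ := hA
  (LCospan.Ranked.interp t).of_iso i

theorem glue (hA : IsInterp A) (hB : IsInterp B) (γ : Gluing A B C) : IsInterp C := by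
  obtain ⟨t, ⟨i⟩⟩ := hA
  obtain ⟨u, ⟨j⟩⟩ := hB
  obtain ⟨k⟩ := (γ.congr i.symm j.symm).nonempty_iso_comp
  exact ⟨t.seq u, ⟨k.symm⟩⟩

theorem tensor {n' m' : ℕ} {D : LCospan S (Fin n') (Fin m')} (hA : IsInterp A)
    (hD : IsInterp D) :
    IsInterp ((A.tensor D).reind finSumFinEquiv.symm finSumFinEquiv.symm) := by
  obtain ⟨t, ⟨i⟩⟩ := hA
  obtain ⟨u, ⟨j⟩⟩ := hD
  exact ⟨t.par u, ⟨(i.tensor j).reind _ _⟩⟩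

end IsInterp

/-- The discrete cospan of a permutation of the interface. -/
def permCospan (S : MonSig) {n : ℕ} (σ : Equiv.Perm (Fin n)) : LCospan S (Fin n) (Fin n) :=
  ⟨discreteLHyp S (Fin n), id, σ⟩

def permCospanGluing (S : MonSig) {n : ℕ} (σ τ : Equiv.Perm (Fin n)) :
    Gluing (permCospan S σ) (permCospan S τ) (permCospan S (σ * τ)) where
  left := id
  right := σ
  edge := Equiv.sumEmpty Empty Empty
  left_injective := Function.injective_id
  right_injective := σ.injective
  cover v := .inl ⟨v, rfl⟩
  overlap _ b := ⟨fun h => ⟨b, h, rfl⟩, by rintro ⟨k, rfl, rfl⟩; rfl⟩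
  src_left e := e.elim
  src_right e := e.elim
  tgt_left e := e.elim
  tgt_right e := e.elim
  label_left e := e.elim
  label_right e := e.elim
  inp_eq _ := rfl
  out_eq _ := rfl

def permCospanTensorIso (S : MonSig) {n m : ℕ} (σ : Equiv.Perm (Fin n)) (τ : Equiv.Perm (Fin m)) :
    LCospanIso (permCospan S (finSumFinEquiv.permCongr (Equiv.sumCongr σ τ)))
      (((permCospan S σ).tensor (permCospan S τ)).reind finSumFinEquiv.symm
        finSumFinEquiv.symm) where
  nodeEquiv := finSumFinEquiv.symm
  edgeEquiv := (Equiv.sumEmpty Empty Empty).symm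
  src_eq e := e.elim
  tgt_eq e := e.elim
  label_eq e := e.elim
  inp_eq x := by
    change finSumFinEquiv.symm x = Sum.elim (fun x => Sum.inl x) (fun x => Sum.inr x)
      (finSumFinEquiv.symm x)
    cases finSumFinEquiv.symm x <;> rfl
  out_eq x := by
    change finSumFinEquiv.symm (finSumFinEquiv (Equiv.sumCongr σ τ (finSumFinEquiv.symm x))) =
      Sum.elim (fun y => Sum.inl (σ y)) (fun y => Sum.inr (τ y)) (finSumFinEquiv.symm x)
    rw [Equiv.symm_apply_apply]
    cases finSumFinEquiv.symm x <;> rfl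

namespace IsInterp

theorem perm_mul {n : ℕ} {σ τ : Equiv.Perm (Fin n)} (hσ : IsInterp (permCospan S σ))
    (hτ : IsInterp (permCospan S τ)) : IsInterp (permCospan S (σ * τ)) :=
  hσ.glue hτ (permCospanGluing S σ τ)

theorem perm_one (n : ℕ) : IsInterp (permCospan S (1 : Equiv.Perm (Fin n))) :=
  ⟨.id n, ⟨LCospanIso.refl _⟩⟩

theorem perm_sum {n m : ℕ} {σ : Equiv.Perm (Fin n)} {τ : Equiv.Perm (Fin m)}
    (hσ : IsInterp (permCospan S σ)) (hτ : IsInterp (permCospan S τ)) :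
    IsInterp (permCospan S (finSumFinEquiv.permCongr (Equiv.sumCongr σ τ))) :=
  let ⟨t, ⟨i⟩⟩ := hσ.tensor hτ
  ⟨t, ⟨(permCospanTensorIso S σ τ).trans i⟩⟩

theorem perm_finAddFlip : IsInterp (permCospan S (finAddFlip : Equiv.Perm (Fin (1 + 1)))) :=
  ⟨.symm 1 1, ⟨LCospanIso.refl _⟩⟩

theorem perm_adjacent {N : ℕ} (i r : ℕ) (h : N = i + (1 + 1) + r) (σ : Equiv.Perm (Fin N))
    (hσ : ∀ x, (σ x : ℕ) = if (x : ℕ) = i then i + 1 else if (x : ℕ) = i + 1 then i else x) :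
    IsInterp (permCospan S σ) := by
  subst h
  have h0 : (finAddFlip : Equiv.Perm (Fin (1 + 1))) 0 = 1 := by decide
  have h1 : (finAddFlip : Equiv.Perm (Fin (1 + 1))) 1 = 0 := by decide
  convert perm_sum (perm_sum (perm_one i) perm_finAddFlip) (perm_one r)
  ext x
  obtain ⟨y | y, rfl⟩ := finSumFinEquiv.surjective x
  · obtain ⟨z | z, rfl⟩ := finSumFinEquiv.surjective y
    · have := z.isLt
      rw [hσ, if_neg (by simp; omega), if_neg (by simp; omega)]
      simp [Equiv.permCongr_apply]
    · rw [hσ]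
      fin_cases z <;> simp [Equiv.permCongr_apply, h0, h1]
  · rw [hσ, if_neg (by simp; omega), if_neg (by simp; omega)]
    simp [Equiv.permCongr_apply]

theorem perm {n : ℕ} (σ : Equiv.Perm (Fin n)) : IsInterp (permCospan S σ) := by
  cases n with
  | zero => rw [Subsingleton.elim σ 1]; exact perm_one 0
  | succ n =>
    have hσ : σ ∈ Submonoid.closure
        (Set.range fun i : Fin n => Equiv.swap i.castSucc i.succ) := by
      rw [Equiv.Perm.mclosure_swap_castSucc_succ]
      exact Submonoid.mem_top σ
    induction hσ using Submonoid.closure_induction with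
    | mem τ hτ =>
      obtain ⟨i, rfl⟩ := hτ
      refine perm_adjacent i (n - 1 - i) (by omega) _ fun x => ?_
      simp only [Equiv.swap_apply_def, Fin.ext_iff, Fin.val_castSucc, Fin.val_succ]
      split_ifs <;> simp
    | one => exact perm_one _
    | mul σ τ _ _ hσ hτ => exact hσ.perm_mul hτ

theorem reind_left {n m : ℕ} {c : LCospan S (Fin n) (Fin m)} (hc : IsInterp c)
    (f : Equiv.Perm (Fin n)) : IsInterp (c.reind f id) := by
  have hi := hc.ranked.cover_inp.injective
  refine (perm f⁻¹).glue hc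
    { left := c.inp ∘ f
      right := id
      edge := Equiv.emptySum Empty _
      left_injective := hi.comp f.injective
      right_injective := Function.injective_id
      cover := fun v => .inr ⟨v, rfl⟩
      overlap := fun a b => ⟨fun h => ⟨f a, (f.symm_apply_apply a).symm, h.symm⟩, ?_⟩
      src_left := fun e => e.elim
      src_right := fun e => (List.map_id _).symm
      tgt_left := fun e => e.elim
      tgt_right := fun e => (List.map_id _).symm
      label_left := fun e => e.elim
      label_right := fun _ => rfl
      inp_eq := fun _ => rfl
      out_eq := fun _ => rfl }
  rintro ⟨k, rfl, rfl⟩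
  exact congrArg c.inp (f.apply_symm_apply k)

theorem reind_right {n m : ℕ} {c : LCospan S (Fin n) (Fin m)} (hc : IsInterp c)
    (g : Equiv.Perm (Fin m)) : IsInterp (c.reind id g) := by
  have ho := hc.ranked.cover_out.injective
  refine hc.glue (perm g)
    { left := id
      right := c.out
      edge := Equiv.sumEmpty _ Empty
      left_injective := Function.injective_id
      right_injective := ho
      cover := fun v => .inl ⟨v, rfl⟩
      overlap := fun a b => ⟨fun h => ⟨b, h, rfl⟩, ?_⟩
      src_left := fun e => (List.map_id _).symm
      src_right := fun e => e.elim
      tgt_left := fun e => (List.map_id _).symm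
      tgt_right := fun e => e.elim
      label_left := fun _ => rfl
      label_right := fun e => e.elim
      inp_eq := fun _ => rfl
      out_eq := fun _ => rfl }
  rintro ⟨k, rfl, rfl⟩
  rfl

end IsInterp

/-- A cospan that becomes isomorphic to the interpretation of a term under some enumeration of
its interfaces. -/
def Realizable (c : LCospan S X Y) : Prop :=
  ∃ (n m : ℕ) (f : Fin n ≃ X) (g : Fin m ≃ Y), IsInterp (c.reind f g)

namespace Realizable

theorem isInterp {c : LCospan S X Y} (hc : Realizable c) {n m : ℕ} (f : Fin n ≃ X)
    (g : Fin m ≃ Y) : IsInterp (c.reind f g) := by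
  obtain ⟨n', m', f', g', h⟩ := hc
  obtain rfl := Fin.equiv_iff_eq.1 ⟨f.trans f'.symm⟩
  obtain rfl := Fin.equiv_iff_eq.1 ⟨g.trans g'.symm⟩
  have h' := (h.reind_left (f.trans f'.symm)).reind_right (g.trans g'.symm)
  have hf : f' ∘ f.trans f'.symm = f := funext fun x => f'.apply_symm_apply _
  have hg : g' ∘ g.trans g'.symm = g := funext fun x => g'.apply_symm_apply _
  simpa only [LCospan.reind, Function.comp_id, Function.comp_assoc, hf, hg] using h'

theorem glue {A : LCospan S X Y} {B : LCospan S Y Z} {C : LCospan S X Z} (hA : Realizable A)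
    (hB : Realizable B) (γ : Gluing A B C) : Realizable C := by
  have ⟨n, m, f, g, hA'⟩ := hA
  have ⟨_, p, _, h, _⟩ := hB
  exact ⟨n, p, f, h, hA'.glue (hB.isInterp g h) (γ.reind f g h)⟩

theorem reind {A : LCospan S X Y} (hA : Realizable A) {X' Y' : Type} (e : X' ≃ X) (e' : Y' ≃ Y) :
    Realizable (A.reind e e') := by
  obtain ⟨n, m, f, g, h⟩ := hA
  refine ⟨n, m, f.trans e.symm, g.trans e'.symm, ?_⟩
  have hf : e ∘ f.trans e.symm = f := funext fun x => e.apply_symm_apply _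
  have hg : e' ∘ g.trans e'.symm = g := funext fun x => e'.apply_symm_apply _
  simpa only [LCospan.reind, Function.comp_assoc, hf, hg] using h

theorem tensor {X' Y' : Type} {A : LCospan S X Y} {B : LCospan S X' Y'} (hA : Realizable A)
    (hB : Realizable B) : Realizable (A.tensor B) := by
  obtain ⟨n, m, f, g, hA⟩ := hA
  obtain ⟨n', m', f', g', hB⟩ := hB
  refine ⟨n + n', m + m', finSumFinEquiv.symm.trans (Equiv.sumCongr f f'),
    finSumFinEquiv.symm.trans (Equiv.sumCongr g g'), ?_⟩
  convert hA.tensor hB using 1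
  refine congrArg₂ (LCospan.mk _) (funext fun x => ?_) (funext fun x => ?_) <;>
    obtain ⟨x | x, rfl⟩ := finSumFinEquiv.surjective x <;>
    simp [LCospan.reind, LCospan.tensor]

theorem gen (o : S.ops) : Realizable (genCospan o) :=
  ⟨_, _, Equiv.refl _, Equiv.refl _, .op o, ⟨LCospanIso.refl _⟩⟩

theorem of_isEmpty {c : LCospan S X Y} [Finite X] [he : IsEmpty c.G.E]
    (hi : Function.Bijective c.inp) (ho : Function.Bijective c.out) : Realizable c := by
  obtain ⟨n, ⟨f⟩⟩ := Finite.exists_equiv_fin X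
  let ι := Equiv.ofBijective c.inp hi
  let ω := Equiv.ofBijective c.out ho
  exact ⟨n, n, f.symm, (f.symm.trans ι).trans ω.symm, .id n, ⟨{
    nodeEquiv := (f.symm.trans ι).symm
    edgeEquiv := @Equiv.equivOfIsEmpty c.G.E Empty he _
    src_eq := fun e => he.elim e
    tgt_eq := fun e => he.elim e
    label_eq := fun e => he.elim e
    inp_eq := (f.symm.trans ι).symm_apply_apply
    out_eq := fun y => by
      have h : c.out (ω.symm (ι (f.symm y))) = ι (f.symm y) := ω.apply_symm_apply _
      exact (congrArg (f.symm.trans ι).symm h).trans ((f.symm.trans ι).symm_apply_apply y) }⟩⟩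

end Realizable

end Realisation

/-! ### Splitting off a minimal hyperedge -/

section Splitting

theorem UniqueCover.comap {X Y E F V W : Type} {f : X → V} {l : E → List V}
    (h : UniqueCover f l) {g : Y → W} {k : F → List W} (p : W → V) (φ : Y ⊕ F × ℕ → X ⊕ E × ℕ)
    (hφ : Function.Injective φ)
    (hs : ∀ w s, Sum.elim (fun y => g y = w) (fun q => (k q.1)[q.2]? = some w) s ↔
      Sum.elim (fun x => f x = p w) (fun q => (l q.1)[q.2]? = some (p w)) (φ s))
    (hr : ∀ w s, Sum.elim (fun x => f x = p w) (fun q => (l q.1)[q.2]? = some (p w)) s →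
      ∃ s', φ s' = s) : UniqueCover g k := by
  intro w
  obtain ⟨s, hs', hu⟩ := h (p w)
  obtain ⟨s, rfl⟩ := hr w s hs'
  exact ⟨s, (hs w s).2 hs', fun t ht => hφ (hu _ ((hs w t).1 ht))⟩

theorem exists_eq_map_finRange {V : Type} {l : List V} {n : ℕ} (h : l.length = n) :
    ∃ s : Fin n → V, l = (List.finRange n).map s := by
  subst h
  exact ⟨l.get, (List.map_get_finRange l).symm⟩

theorem getElem?_attachWith_eq_some_iff {V : Type} {P : V → Prop} {l : List V}
    (h : ∀ v ∈ l, P v) (i : ℕ) (w : {v // P v}) :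
    (l.attachWith P h)[i]? = some w ↔ l[i]? = some w.1 := by
  conv_rhs => rw [← List.attachWith_map_subtype_val h, List.getElem?_map]
  exact (Option.map_injective Subtype.val_injective).eq_iff (b := some w) |>.symm

namespace LCospan

variable {S : MonSig} {X Y : Type}

/-- The subhypergraph on given sets of nodes and hyperedges, as a cospan with given legs. -/
def restrict (c : LCospan S X Y) (P : c.G.V → Prop) (Q : c.G.E → Prop)
    (hs : ∀ h, Q h → ∀ v ∈ c.G.src h, P v) (ht : ∀ h, Q h → ∀ v ∈ c.G.tgt h, P v) {X' Y' : Type}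
    (inp : X' → {v // P v}) (out : Y' → {v // P v}) : LCospan S X' Y' where
  G := { V := {v // P v}
         E := {h // Q h}
         src := fun h => (c.G.src h.1).attachWith P (hs h.1 h.2)
         tgt := fun h => (c.G.tgt h.1).attachWith P (ht h.1 h.2)
         label := fun h => c.G.label h.1
         src_len := fun h => by rw [List.length_attachWith, c.G.src_len]
         tgt_len := fun h => by rw [List.length_attachWith, c.G.tgt_len] }
  inp := inp
  out := out

/-- A hyperedge that is not a successor can be split off as the first factor of a composite. -/
theorem Ranked.exists_gluing {c : LCospan S X Y} (hc : c.Ranked) (e : c.G.E)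
    (he : ∀ h, ∀ v ∈ c.G.tgt h, v ∉ c.G.src e) :
    ∃ (R : Set X) (α : X ≃ Fin (S.ar (c.G.label e)) ⊕ R)
      (c' : LCospan S (Fin (S.coar (c.G.label e)) ⊕ R) Y), c'.Ranked ∧
      Nonempty (c'.G.E ≃ {h // h ≠ e}) ∧
      Nonempty (Gluing (((genCospan (c.G.label e)).tensor
        (⟨discreteLHyp S R, id, id⟩ : LCospan S R R)).reind α id) c' c) := by
  obtain ⟨s, hs⟩ := exists_eq_map_finRange (c.G.src_len e)
  obtain ⟨t, ht⟩ := exists_eq_map_finRange (c.G.tgt_len e)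
  have hs' (i : Fin _) : (c.G.src e)[(i : ℕ)]? = some (s i) := by simp [hs]
  have ht' (i : Fin _) : (c.G.tgt e)[(i : ℕ)]? = some (t i) := by simp [ht]
  have hsm (i) : s i ∈ c.G.src e := List.mem_of_getElem? (hs' i)
  have htm (i) : t i ∈ c.G.tgt e := List.mem_of_getElem? (ht' i)
  have hsr (v) (hv : v ∈ c.G.src e) : ∃ i, s i = v := by simpa [hs] using hv
  have hsi : Function.Injective s := fun i j h =>
    Fin.ext (hc.cover_out.eq_of_getElem? (hs' i) (h ▸ hs' j)).2
  have hti : Function.Injective t := fun i j h =>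
    Fin.ext (hc.cover_inp.eq_of_getElem? (ht' i) (h ▸ ht' j)).2
  have hχ (i) : ∃ x, c.inp x = s i :=
    (hc.cover_inp.exists_or (s i)).resolve_right fun ⟨h, hh⟩ => he h _ hh (hsm i)
  choose χ hχ using hχ
  let R : Set X := {x | c.inp x ∉ c.G.src e}
  let β : Fin (S.ar (c.G.label e)) ⊕ R ≃ X :=
    Equiv.ofBijective (Sum.elim χ Subtype.val) ⟨by
      refine Function.Injective.sumElim (fun i j h => hsi ?_) Subtype.val_injective ?_
      · rw [← hχ, h, hχ]
      · rintro i ⟨x, hx⟩ rfl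
        exact hx (hχ i ▸ hsm i), fun x => by
      by_cases hx : c.inp x ∈ c.G.src e
      · obtain ⟨i, hi⟩ := hsr _ hx
        exact ⟨.inl i, hc.cover_inp.injective ((hχ i).trans hi)⟩
      · exact ⟨.inr ⟨x, hx⟩, rfl⟩⟩
  let ε : (Unit ⊕ Empty) ⊕ {h // h ≠ e} ≃ c.G.E :=
    Equiv.ofBijective (Sum.elim (Sum.elim (fun _ => e) Empty.elim) Subtype.val) ⟨by
      refine Function.Injective.sumElim (Function.Injective.sumElim
        (fun _ _ _ => rfl) (fun x => x.elim) fun _ x => x.elim) Subtype.val_injective ?_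
      rintro (_ | x) ⟨h, hh⟩
      · exact hh.symm
      · exact x.elim, fun h => by
      by_cases hh : h = e
      · exact ⟨.inl (.inl ()), hh.symm⟩
      · exact ⟨.inr ⟨h, hh⟩, rfl⟩⟩
  let c' : LCospan S (Fin (S.coar (c.G.label e)) ⊕ R) Y :=
    c.restrict (· ∉ c.G.src e) (· ≠ e)
      (fun h hh v hv hv' => hh (hc.cover_out.eq_of_mem hv hv')) (fun h _ => he h)
      (Sum.elim (fun i => ⟨t i, he e _ (htm i)⟩) (fun x => ⟨c.inp x, x.2⟩))
      (fun y => ⟨c.out y, hc.cover_out.notMem y e⟩)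
  refine ⟨R, β.symm, c', ⟨?_, ?_, ?_⟩, ⟨Equiv.refl _⟩, ⟨{
    left := Sum.elim (Sum.elim s t) (fun x => c.inp x.1)
    right := Subtype.val
    edge := ε
    left_injective := ?_
    right_injective := Subtype.val_injective
    cover := fun v => ?_
    overlap := ?_
    src_left := ?_
    src_right := fun h => (List.attachWith_map_subtype_val _).symm
    tgt_left := ?_
    tgt_right := fun h => (List.attachWith_map_subtype_val _).symm
    label_left := ?_
    label_right := fun _ => rfl
    inp_eq := fun x => ?_
    out_eq := fun _ => rfl }⟩⟩
  · refine hc.cover_inp.comap Subtype.val (Sum.elim (Sum.elim (fun i => .inr (e, i))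
      (fun x => .inl x.1)) (fun q => .inr (q.1.1, q.2))) ?_ ?_ ?_
    · refine Function.Injective.sumElim (Function.Injective.sumElim
        (fun i j hij => Fin.ext (congrArg Prod.snd (Sum.inr_injective hij)))
        (Sum.inl_injective.comp Subtype.val_injective) fun _ _ => Sum.inr_ne_inl)
        (Sum.inr_injective.comp (Subtype.val_injective.prodMap Function.injective_id)) ?_
      rintro (i | x) ⟨⟨h, hh⟩, j⟩ hij
      · exact hh (congrArg Prod.fst (Sum.inr_injective hij)).symm
      · exact Sum.inl_ne_inr hij
    · rintro w ((i | x) | ⟨h, i⟩)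
      · change _ ↔ (c.G.tgt e)[(i : ℕ)]? = some w.1
        rw [ht' i]
        exact Subtype.ext_iff.trans (Option.some_inj (a := t i) (b := w.1)).symm
      · exact Subtype.ext_iff
      · exact getElem?_attachWith_eq_some_iff _ _ _
    · rintro w (x | ⟨h, i⟩) hw
      · exact ⟨.inl (.inr ⟨x, fun hx => w.2 (hw ▸ hx)⟩), rfl⟩
      · by_cases hh : h = e
        · subst hh
          have hi : i < S.coar (c.G.label h) :=
            c.G.tgt_len h ▸ (List.getElem?_eq_some_iff.1 hw).1
          exact ⟨.inl (.inl ⟨i, hi⟩), rfl⟩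
        · exact ⟨.inr (⟨h, hh⟩, i), rfl⟩
  · refine hc.cover_out.comap Subtype.val (Sum.map id (Prod.map Subtype.val id))
      (Function.injective_id.sumMap (Subtype.val_injective.prodMap Function.injective_id)) ?_ ?_
    · rintro w (y | ⟨h, i⟩)
      · exact Subtype.ext_iff
      · exact getElem?_attachWith_eq_some_iff _ _ _
    · rintro w (y | ⟨h, i⟩) hw
      · exact ⟨.inl y, rfl⟩
      · refine ⟨.inr (⟨h, ?_⟩, i), rfl⟩
        rintro rfl
        exact w.2 (List.mem_of_getElem? hw)
  · obtain ⟨ρ, hρ, N, hN⟩ := hc.exists_isRank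
    refine ⟨fun h => ρ h.1, fun h h' v hv hv' => hρ _ _ v.1 ?_ ?_, N, fun h => hN h.1⟩
    · exact (List.mem_attachWith _ _).1 hv
    · exact (List.mem_attachWith _ _).1 hv'
  · refine Function.Injective.sumElim (Function.Injective.sumElim hsi hti fun i j h => ?_)
      (hc.cover_inp.injective.comp Subtype.val_injective) ?_
    · exact he e _ (htm j) (h ▸ hsm i)
    · rintro (i | j) x h
      · exact x.2 (h ▸ hsm i)
      · exact hc.cover_inp.notMem x.1 e (h ▸ htm j)
  · by_cases hv : v ∈ c.G.src e
    · obtain ⟨i, hi⟩ := hsr v hv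
      exact .inl ⟨.inl (.inl i), hi⟩
    · exact .inr ⟨⟨v, hv⟩, rfl⟩
  · rintro a b
    constructor
    · intro h
      rcases a with (i | j) | x
      · exact (b.2 (h ▸ hsm i)).elim
      · exact ⟨.inl j, rfl, Subtype.ext h.symm⟩
      · exact ⟨.inr x, rfl, Subtype.ext h.symm⟩
    · rintro ⟨j | x, rfl, rfl⟩ <;> rfl
  · rintro (_ | x)
    · refine hs.trans ?_
      change _ = (((List.finRange (S.ar (c.G.label e))).map Sum.inl).map Sum.inl).map
        (Sum.elim (Sum.elim s t) fun x : R => c.inp x.1)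
      rw [List.map_map, List.map_map]
      rfl
    · exact x.elim
  · rintro (_ | x)
    · refine ht.trans ?_
      change _ = (((List.finRange (S.coar (c.G.label e))).map Sum.inr).map Sum.inl).map
        (Sum.elim (Sum.elim s t) fun x : R => c.inp x.1)
      rw [List.map_map, List.map_map]
      rfl
    · exact x.elim
  · rintro (_ | x)
    · rfl
    · exact x.elim
  · obtain ⟨p, rfl⟩ := β.surjective x
    change c.inp (β p) = Sum.elim (Sum.elim s t) (fun x => c.inp x.1)
      (Sum.elim (fun i => Sum.inl (Sum.inl i)) (fun x => Sum.inr x) (β.symm (β p)))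
    rw [Equiv.symm_apply_apply]
    rcases p with i | x
    · exact hχ i
    · rfl

theorem Ranked.realizable {c : LCospan S X Y} [Finite X] [Finite c.G.E] (hc : c.Ranked) :
    Realizable c := by
  classical
  induction hk : Nat.card c.G.E generalizing X with
  | zero =>
    have : IsEmpty c.G.E := Finite.card_eq_zero_iff.1 hk
    exact .of_isEmpty
      ⟨hc.cover_inp.injective, fun v => (hc.cover_inp.exists_or v).resolve_right
        fun ⟨e, _⟩ => isEmptyElim e⟩
      ⟨hc.cover_out.injective, fun v => (hc.cover_out.exists_or v).resolve_right
        fun ⟨e, _⟩ => isEmptyElim e⟩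
  | succ k ih =>
    obtain ⟨ρ, hρ, -⟩ := hc.exists_isRank
    have : Nonempty c.G.E := (Nat.card_pos_iff.1 (hk ▸ k.succ_pos)).1
    obtain ⟨e, he⟩ := Finite.exists_min ρ
    obtain ⟨R, α, c', hc', ⟨ε⟩, ⟨γ⟩⟩ :=
      hc.exists_gluing e fun h v hv hv' => (hρ h e v hv hv').not_ge (he h)
    have : Finite c'.G.E := .of_equiv _ ε.symm
    have hcard : Nat.card c'.G.E = k := by
      rw [Nat.card_congr ε]
      have := Nat.card_congr (Equiv.optionSubtypeNe e)
      rw [Finite.card_option] at this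
      omega
    have hR : Realizable (LCospan.mk (discreteLHyp S R) id id : LCospan S R R) :=
      .of_isEmpty (he := inferInstanceAs (IsEmpty Empty))
        Function.bijective_id Function.bijective_id
    exact (((Realizable.gen _).tensor hR).reind α (Equiv.refl _)).glue (ih hc' hcard) γ

end LCospan

end Splitting

/-- **Characterisation of the image of the interpretation.** A cospan
`n → G ← m` of `Σ`-labelled hypergraphs with finite carrier is isomorphic to the
interpretation `⟦t⟧` of some `Σ`-term `t : n → m` if and only if it is monogamous
and acyclic. -/
theorem characterisation_of_image {S : MonSig} {n m : ℕ} (c : LCospan S (Fin n) (Fin m))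
    (hV : Finite c.G.V) (hE : Finite c.G.E) :
    (∃ t : Term S n m, Nonempty (LCospanIso c (interp t))) ↔
      (c.Monogamous ∧ c.Acyclic) := by
  constructor
  · rintro ⟨t, ⟨i⟩⟩
    have hc := (LCospan.Ranked.interp t).of_iso i
    exact ⟨hc.monogamous, hc.acyclic⟩
  · rintro ⟨hm, ha⟩
    obtain ⟨hi, ho⟩ := c.monogamous_iff.1 hm
    obtain ⟨ρ, hρ⟩ := Hyp.Acyclic.exists_isRank (G := c.G.toHyp) ha
    obtain ⟨N, hN⟩ := (Set.finite_range ρ).bddAbove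
    have hc : c.Ranked := ⟨hi, ho, ρ, hρ, N + 1, fun e => Nat.lt_succ_of_le (hN ⟨e, rfl⟩)⟩
    exact hc.realizable.isInterp (Equiv.refl _) (Equiv.refl _)

end SDRT
end
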